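/- arXiv:2005.07906 — 14 statements merged into one kernel-verified Lean document; each statement's English description precedes it below -/
import Mathlib

section
/- The complete graph K_n admits a tripartite 2-partition if and only if n ≤ 5. -/
/-- The edge set of the complete tripartite subgraph of the complete graph on `V`
determined by the three pairwise disjoint parts `A`, `B`, `C`:
all unordered pairs of vertices lying in two distinct parts. -/
def triEdges {V : Type*} (A B C : Set V) : Set (Sym2 V) :=
  {e | ∃ u v : V, e = s(u, v) ∧
    ((u ∈ A ∧ v ∈ B) ∨ (u ∈ A ∧ v ∈ C) ∨ (u ∈ B ∧ v ∈ C))}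

/-- The complete graph `K_n` admits a tripartite 2-partition: its edge set is the
disjoint union of the edge sets of two complete tripartite subgraphs. -/
def HasTripartite2Partition (n : ℕ) : Prop :=
  ∃ A₁ B₁ C₁ A₂ B₂ C₂ : Set (Fin n),
    Disjoint A₁ B₁ ∧ Disjoint A₁ C₁ ∧ Disjoint B₁ C₁ ∧
    Disjoint A₂ B₂ ∧ Disjoint A₂ C₂ ∧ Disjoint B₂ C₂ ∧
    (⊤ : SimpleGraph (Fin n)).edgeSet = triEdges A₁ B₁ C₁ ∪ triEdges A₂ B₂ C₂ ∧
    Disjoint (triEdges A₁ B₁ C₁) (triEdges A₂ B₂ C₂)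

theorem mk_mem_triEdges {V : Type*} (A B C : Set V) (u v : V) :
    s(u, v) ∈ triEdges A B C ↔
      ((u ∈ A ∧ v ∈ B) ∨ (u ∈ A ∧ v ∈ C) ∨ (u ∈ B ∧ v ∈ C)) ∨
      ((v ∈ A ∧ u ∈ B) ∨ (v ∈ A ∧ u ∈ C) ∨ (v ∈ B ∧ u ∈ C)) := by
  constructor
  · rintro ⟨a, b, hab, h⟩
    rcases Sym2.eq_iff.1 hab with ⟨rfl, rfl⟩ | ⟨rfl, rfl⟩
    · exact Or.inl h
    · exact Or.inr h
  · rintro (h | h)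
    · exact ⟨u, v, rfl, h⟩
    · exact ⟨v, u, Sym2.eq_swap, h⟩

/-- Labels recording the part of a vertex. -/
inductive PartLabel : Type
  | o
  | a
  | b
  | c

open PartLabel

/-- Two labels (`o` meaning outside all parts) are separated. -/
def sepLabel : PartLabel → PartLabel → Bool
  | a, b => true
  | a, c => true
  | b, a => true
  | b, c => true
  | c, a => true
  | c, b => true
  | _, _ => false

/-- Pairs of labels separated by exactly one of the two tripartite graphs. -/
def goodLabel (p q : PartLabel × PartLabel) : Bool :=
  xor (sepLabel p.1 q.1) (sepLabel p.2 q.2)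

theorem exists_label {V : Type*} (A B C : Set V) (h1 : Disjoint A B) (h2 : Disjoint A C)
    (h3 : Disjoint B C) :
    ∃ f : V → PartLabel, ∀ u v, s(u, v) ∈ triEdges A B C ↔ sepLabel (f u) (f v) = true := by
  classical
  refine ⟨fun v => if v ∈ A then a else if v ∈ B then b else if v ∈ C then c else o, ?_⟩
  intro u v
  rw [Set.disjoint_left] at h1 h2 h3
  rw [mk_mem_triEdges]
  have a1 := @h1 u
  have a2 := @h2 u
  have a3 := @h3 u
  have b1 := @h1 v
  have b2 := @h2 v
  have b3 := @h3 v
  by_cases uA : u ∈ A <;> by_cases uB : u ∈ B <;> by_cases uC : u ∈ C <;>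
  by_cases vA : v ∈ A <;> by_cases vB : v ∈ B <;> by_cases vC : v ∈ C <;>
  simp_all [sepLabel]

/-- Exhaustive search: no sequence of `k` pairwise good labels inside `l`. -/
def noClique : ℕ → List (PartLabel × PartLabel) → Bool
  | 0, _ => false
  | k + 1, l => l.all fun x => noClique k (l.filter (goodLabel x))

theorem noClique_sound : ∀ (c l : List (PartLabel × PartLabel)), noClique c.length l = true →
    (∀ x ∈ c, x ∈ l) → c.Pairwise (fun x y => goodLabel x y = true) → False
  | [], _, h, _, _ => by simp [noClique] at h
  | x :: t, l, h, hm, hp => by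
    rw [List.pairwise_cons] at hp
    simp only [List.length_cons, noClique, List.all_eq_true] at h
    refine noClique_sound t _ (h x (hm x (by simp))) ?_ hp.2
    intro y hy
    exact List.mem_filter.2 ⟨hm y (by simp [hy]), hp.1 y hy⟩

/-- All sixteen labels. -/
def allLabels : List (PartLabel × PartLabel) :=
  [(o, o), (o, a), (o, b), (o, c), (a, o), (a, a), (a, b), (a, c),
   (b, o), (b, a), (b, b), (b, c), (c, o), (c, a), (c, b), (c, c)]

theorem noClique_six : noClique 6 allLabels = true := by
  decide +kernel

/-- The complete graph `K_n` admits a tripartite 2-partition if and only if `n ≤ 5`. -/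
theorem completeGraph_hasTripartite2Partition_iff (n : ℕ) :
    HasTripartite2Partition n ↔ n ≤ 5 := by
  constructor
  · rintro ⟨A₁, B₁, C₁, A₂, B₂, C₂, h1, h2, h3, h4, h5, h6, hE, hD⟩
    by_contra hn
    obtain ⟨f, hf⟩ := exists_label A₁ B₁ C₁ h1 h2 h3
    obtain ⟨g, hg⟩ := exists_label A₂ B₂ C₂ h4 h5 h6
    have key : ∀ i j : Fin n, i ≠ j → goodLabel (f i, g i) (f j, g j) = true := by
      intro i j hij
      have hm : s(i, j) ∈ triEdges A₁ B₁ C₁ ∪ triEdges A₂ B₂ C₂ := by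
        rw [← hE]
        simpa using hij
      have hd : s(i, j) ∈ triEdges A₁ B₁ C₁ → s(i, j) ∉ triEdges A₂ B₂ C₂ :=
        fun h => Set.disjoint_left.1 hD h
      rw [Set.mem_union] at hm
      rw [hf, hg] at hm hd
      unfold goodLabel
      cases hx : sepLabel (f i) (f j) <;> cases hy : sepLabel (g i) (g j) <;> simp_all
    have key' : ∀ i j : Fin 6, i ≠ j →
        goodLabel (f (Fin.castLE (by omega) i), g (Fin.castLE (by omega) i))
          (f (Fin.castLE (by omega) j), g (Fin.castLE (by omega) j)) = true := by
      intro i j hij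
      exact key _ _ (fun h => hij (Fin.castLE_injective _ h))
    let F : Fin 6 → PartLabel × PartLabel := fun i =>
      (f (Fin.castLE (by omega) i), g (Fin.castLE (by omega) i))
    refine noClique_sound (List.ofFn F) allLabels ?_ ?_ ?_
    · rw [List.length_ofFn]
      exact noClique_six
    · rintro ⟨x, y⟩ -
      cases x <;> cases y <;> simp [allLabels]
    · rw [List.pairwise_ofFn]
      intro i j hij
      exact key' i j hij.ne
  · intro hn
    refine ⟨{v | v.val = 0}, {v | v.val = 1}, {v | 2 ≤ v.val},
      {v | v.val = 2}, {v | v.val = 3}, {v | v.val = 4}, ?_, ?_, ?_, ?_, ?_, ?_, ?_, ?_⟩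
    any_goals
      rw [Set.disjoint_left]
      intro a
      simp only [Set.mem_ofPred_eq]
      omega
    · ext e
      induction e using Sym2.ind with
      | _ u v =>
        rw [Set.mem_union, mk_mem_triEdges, mk_mem_triEdges]
        simp only [SimpleGraph.mem_edgeSet, SimpleGraph.top_adj, Set.mem_ofPred_eq, ne_eq,
          Fin.ext_iff]
        have hu : u.val < 5 := by omega
        have hv : v.val < 5 := by omega
        generalize u.val = x at hu ⊢
        generalize v.val = y at hv ⊢
        interval_cases x <;> interval_cases y <;> decide
    · rw [Set.disjoint_left]
      intro e
      induction e using Sym2.ind with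
      | _ u v =>
        rw [mk_mem_triEdges, mk_mem_triEdges]
        simp only [Set.mem_ofPred_eq]
        omega
end

section
/- For any tripartite 2-partition {T_1, T_2} of the complete graph K_5, there is a relabeling of the five vertices as v_1, …, v_5 (and possibly a swap of T_1 and T_2) such that E(T_1) is the edge set of the triangle on {v_1, v_2, v_3} and E(T_2) is the edge set of the complete tripartite graph with parts {v_1, v_2, v_3}, {v_4}, {v_5}. In other words, up to an automorphism of K_5 the tripartite 2-partition of K_5 is unique. -/
/-- Two vertices with part labels `p`, `q` (label `0` means in no part) are adjacent. -/
def tadj (p q : Fin 4) : Bool := p != 0 && q != 0 && p != q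

/-- Exactly one of the two tripartite graphs contains the edge. -/
def tok (p q r s : Fin 4) : Prop := (tadj p q ^^ tadj r s) = true

instance (p q r s : Fin 4) : Decidable (tok p q r s) := by unfold tok; infer_instance

/-- The graph of labelling `a` is the complete graph on the complement of `{s, t}`. -/
def tgood (a : Fin 5 → Fin 4) (s t : Fin 5) : Prop :=
  ∀ u v : Fin 5, u < v → tadj (a u) (a v) = (u != s && u != t && v != s && v != t)

instance (a : Fin 5 → Fin 4) (s t : Fin 5) : Decidable (tgood a s t) := by
  unfold tgood; infer_instance

set_option maxRecDepth 100000 in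
theorem tsearch : ∀ a0 b0 a1 b1 : Fin 4, tok a0 a1 b0 b1 →
    ∀ a2 b2 : Fin 4, tok a0 a2 b0 b2 → tok a1 a2 b1 b2 →
    ∀ a3 b3 : Fin 4, tok a0 a3 b0 b3 → tok a1 a3 b1 b3 → tok a2 a3 b2 b3 →
    ∀ a4 b4 : Fin 4, tok a0 a4 b0 b4 → tok a1 a4 b1 b4 → tok a2 a4 b2 b4 →
      tok a3 a4 b3 b4 →
    ∃ s t : Fin 5, s < t ∧ (tgood ![a0, a1, a2, a3, a4] s t ∨
      tgood ![b0, b1, b2, b3, b4] s t) := by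
  decide +kernel

theorem tsearch' (a b : Fin 5 → Fin 4) (h : ∀ u v, u ≠ v → tok (a u) (a v) (b u) (b v)) :
    ∃ s t : Fin 5, s < t ∧ (tgood a s t ∨ tgood b s t) := by
  have ha : a = ![a 0, a 1, a 2, a 3, a 4] := by ext i; fin_cases i <;> rfl
  have hb : b = ![b 0, b 1, b 2, b 3, b 4] := by ext i; fin_cases i <;> rfl
  rw [ha, hb]
  apply tsearch <;> exact h _ _ (by decide)

theorem exists_perm34 : ∀ s t : Fin 5, s < t →
    ∃ σ : Equiv.Perm (Fin 5), σ 3 = s ∧ σ 4 = t := by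
  decide +kernel

theorem mem_triEdges (A B C : Set (Fin 5)) (u v : Fin 5) : s(u, v) ∈ triEdges A B C ↔
    ((u ∈ A ∧ v ∈ B) ∨ (u ∈ A ∧ v ∈ C) ∨ (u ∈ B ∧ v ∈ C)) ∨
    ((v ∈ A ∧ u ∈ B) ∨ (v ∈ A ∧ u ∈ C) ∨ (v ∈ B ∧ u ∈ C)) := by
  constructor
  · rintro ⟨x, y, hxy, h⟩
    rcases Sym2.eq_iff.1 hxy with ⟨rfl, rfl⟩ | ⟨rfl, rfl⟩
    · exact Or.inl h
    · exact Or.inr h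
  · rintro (h | h)
    · exact ⟨u, v, rfl, h⟩
    · exact ⟨v, u, Sym2.eq_swap, h⟩

theorem triEdges_label (A B C : Set (Fin 5))
    (h₁ : Disjoint A B) (h₂ : Disjoint A C) (h₃ : Disjoint B C) :
    ∃ a : Fin 5 → Fin 4, ∀ u v, s(u, v) ∈ triEdges A B C ↔ tadj (a u) (a v) = true := by
  classical
  refine ⟨fun u => if u ∈ A then 1 else if u ∈ B then 2 else if u ∈ C then 3 else 0, ?_⟩
  intro u v
  rw [mem_triEdges]
  have d₁ := fun x (hx : x ∈ A) => Set.disjoint_left.1 h₁ hx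
  have d₂ := fun x (hx : x ∈ A) => Set.disjoint_left.1 h₂ hx
  have d₃ := fun x (hx : x ∈ B) => Set.disjoint_left.1 h₃ hx
  have := d₁ u; have := d₁ v; have := d₂ u; have := d₂ v; have := d₃ u; have := d₃ v
  clear d₁ d₂ d₃ h₁ h₂ h₃
  by_cases p1 : u ∈ A <;> by_cases p2 : u ∈ B <;> by_cases p3 : u ∈ C <;>
  by_cases q1 : v ∈ A <;> by_cases q2 : v ∈ B <;> by_cases q3 : v ∈ C <;>
  simp_all [tadj]

theorem mem_tri1 (σ : Equiv.Perm (Fin 5)) (u v : Fin 5) :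
    s(u, v) ∈ triEdges {σ 0} {σ 1} {σ 2} ↔
      u ≠ v ∧ (u ≠ σ 3 ∧ u ≠ σ 4 ∧ v ≠ σ 3 ∧ v ≠ σ 4) := by
  obtain ⟨i, rfl⟩ := σ.surjective u
  obtain ⟨j, rfl⟩ := σ.surjective v
  simp only [mem_triEdges, Set.mem_singleton_iff, ne_eq,
    σ.injective.eq_iff]
  clear σ
  revert i j
  decide +kernel

theorem mem_tri2 (σ : Equiv.Perm (Fin 5)) (u v : Fin 5) :
    s(u, v) ∈ triEdges {σ 0, σ 1, σ 2} {σ 3} {σ 4} ↔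
      u ≠ v ∧ ¬ (u ≠ σ 3 ∧ u ≠ σ 4 ∧ v ≠ σ 3 ∧ v ≠ σ 4) := by
  obtain ⟨i, rfl⟩ := σ.surjective u
  obtain ⟨j, rfl⟩ := σ.surjective v
  simp only [mem_triEdges, Set.mem_singleton_iff, Set.mem_insert_iff,
    ne_eq, σ.injective.eq_iff]
  clear σ
  revert i j
  decide +kernel

theorem tfinish (E F : Set (Sym2 (Fin 5))) (a : Fin 5 → Fin 4)
    (ha : ∀ u v, s(u, v) ∈ E ↔ tadj (a u) (a v) = true)
    (hx : ∀ u v, s(u, v) ∈ F ↔ (u ≠ v ∧ s(u, v) ∉ E))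
    (σ : Equiv.Perm (Fin 5)) (hg : tgood a (σ 3) (σ 4)) :
    E = triEdges {σ 0} {σ 1} {σ 2} ∧ F = triEdges {σ 0, σ 1, σ 2} {σ 3} {σ 4} := by
  have hE : ∀ u v, s(u, v) ∈ E ↔ u ≠ v ∧ (u ≠ σ 3 ∧ u ≠ σ 4 ∧ v ≠ σ 3 ∧ v ≠ σ 4) := by
    intro u v
    rcases lt_trichotomy u v with h | h | h
    · rw [ha, hg u v h]; simp [h.ne, and_assoc]
    · subst h; rw [ha]; simp [tadj]
    · rw [Sym2.eq_swap, ha, hg v u h]; simp [h.ne']; tauto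
  constructor
  · ext e
    induction e using Sym2.ind with
    | _ u v => rw [hE, mem_tri1]
  · ext e
    induction e using Sym2.ind with
    | _ u v => rw [hx, hE, mem_tri2]; tauto

/-- Up to an automorphism of `K_5` (a relabeling of the five vertices, and possibly a
swap of the two parts), the tripartite 2-partition of `K_5` is unique: one part is the
triangle on `{v₁, v₂, v₃}` and the other is the complete tripartite graph with parts
`{v₁, v₂, v₃}`, `{v₄}`, `{v₅}`. -/
theorem tripartite2Partition_K5_unique
    (A₁ B₁ C₁ A₂ B₂ C₂ : Set (Fin 5))
    (h₁ : Disjoint A₁ B₁) (h₂ : Disjoint A₁ C₁) (h₃ : Disjoint B₁ C₁)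
    (h₄ : Disjoint A₂ B₂) (h₅ : Disjoint A₂ C₂) (h₆ : Disjoint B₂ C₂)
    (hunion : (⊤ : SimpleGraph (Fin 5)).edgeSet
      = triEdges A₁ B₁ C₁ ∪ triEdges A₂ B₂ C₂)
    (hdisj : Disjoint (triEdges A₁ B₁ C₁) (triEdges A₂ B₂ C₂)) :
    ∃ σ : Equiv.Perm (Fin 5),
      (triEdges A₁ B₁ C₁ = triEdges {σ 0} {σ 1} {σ 2} ∧
          triEdges A₂ B₂ C₂ = triEdges {σ 0, σ 1, σ 2} {σ 3} {σ 4}) ∨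
        (triEdges A₂ B₂ C₂ = triEdges {σ 0} {σ 1} {σ 2} ∧
          triEdges A₁ B₁ C₁ = triEdges {σ 0, σ 1, σ 2} {σ 3} {σ 4}) := by
  obtain ⟨a, ha⟩ := triEdges_label A₁ B₁ C₁ h₁ h₂ h₃
  obtain ⟨b, hb⟩ := triEdges_label A₂ B₂ C₂ h₄ h₅ h₆
  generalize triEdges A₁ B₁ C₁ = E at *
  generalize triEdges A₂ B₂ C₂ = F at *
  have hU : ∀ u v : Fin 5, u ≠ v ↔ (s(u, v) ∈ E ∨ s(u, v) ∈ F) := by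
    intro u v
    rw [← Set.mem_union, ← hunion]
    simp
  have hD : ∀ u v : Fin 5, s(u, v) ∈ E → s(u, v) ∉ F :=
    fun u v h => Set.disjoint_left.1 hdisj h
  obtain ⟨s, t, hst, hg⟩ := tsearch' a b (by
    intro u v huv
    have h1 := (hU u v).1 huv
    have h2 := hD u v
    rw [ha, hb] at h1 h2
    unfold tok
    cases h : tadj (a u) (a v) <;> cases h' : tadj (b u) (b v) <;> simp_all)
  obtain ⟨σ, rfl, rfl⟩ := exists_perm34 s t hst
  refine ⟨σ, ?_⟩
  rcases hg with hg | hg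
  · left
    refine tfinish E F a ha (fun u v => ?_) σ hg
    have := hU u v; have := hD u v; tauto
  · right
    refine tfinish F E b hb (fun u v => ?_) σ hg
    have := hU u v; have := hD u v; tauto
end

section
/- Let F ∈ Z_2[x_1, …, x_n] be a multilinear polynomial such that for every pair of distinct indices {i, j}, both F^{00}_{ij} + F^{11}_{ij} and F^{01}_{ij} + F^{10}_{ij} are constant polynomials (identically 0 or identically 1). Then the total degree of F is at most 2; moreover, if the total degree of F equals 2, then F is a complete quadratic polynomial. -/
/-- The multilinear polynomial `F^{ab}_{ij}` obtained from `F` by substituting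
`x_i := a` and `x_j := b`. -/
noncomputable def pinPoly {n : ℕ} (i j : Fin n) (a b : ZMod 2)
    (F : MvPolynomial (Fin n) (ZMod 2)) : MvPolynomial (Fin n) (ZMod 2) :=
  MvPolynomial.bind₁
    (fun k => if k = i then MvPolynomial.C a else
      if k = j then MvPolynomial.C b else MvPolynomial.X k) F

open MvPolynomial in
lemma pin_aux_monomial {n : ℕ} (i j : Fin n) (hij : i ≠ j) (a b c : ZMod 2)
    (m d : Fin n →₀ ℕ) (hmi : m i = 0) (hmj : m j = 0) (hdi : d i ≤ 1) (hdj : d j ≤ 1) :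
    coeff m (pinPoly i j a b (monomial d c)) =
      coeff m (monomial d c) + a * coeff (m + Finsupp.single i 1) (monomial d c)
      + b * coeff (m + Finsupp.single j 1) (monomial d c)
      + a * b * coeff (m + Finsupp.single i 1 + Finsupp.single j 1) (monomial d c) := by
  classical
  obtain ⟨e, p, q, hei, hej, rfl⟩ : ∃ (e : Fin n →₀ ℕ) (p q : ℕ), e i = 0 ∧ e j = 0 ∧
      d = e + Finsupp.single i p + Finsupp.single j q := by
    refine ⟨(d.erase i).erase j, d i, d j, ?_, ?_, ?_⟩
    · simp [Finsupp.erase_ne hij]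
    · simp
    · ext k
      by_cases h1 : k = i
      · subst h1
        simp [Finsupp.erase_ne hij, hij.symm]
      · by_cases h2 : k = j
        · subst h2
          simp [Ne.symm h1]
        · simp [Finsupp.erase_ne h1, Finsupp.erase_ne h2, Ne.symm h1, Ne.symm h2, h1, h2]
  have hpin : pinPoly i j a b (monomial e c) = monomial e c := by
    unfold pinPoly
    rw [bind₁_monomial, monomial_eq, Finsupp.prod]
    congr 1
    refine Finset.prod_congr rfl fun k hk => ?_
    have hk' : e k ≠ 0 := by simpa using hk
    have h1 : k ≠ i := by rintro rfl; exact hk' hei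
    have h2 : k ≠ j := by rintro rfl; exact hk' hej
    simp [h1, h2]
  have hmon : (monomial (e + Finsupp.single i p + Finsupp.single j q) c : MvPolynomial (Fin n) (ZMod 2))
      = monomial e c * X i ^ p * X j ^ q := by
    rw [X_pow_eq_monomial, X_pow_eq_monomial, monomial_mul, monomial_mul, mul_one, mul_one]
  have hpin2 : pinPoly i j a b (monomial (e + Finsupp.single i p + Finsupp.single j q) c)
      = monomial e (c * a ^ p * b ^ q) := by
    rw [hmon]
    have : pinPoly i j a b (monomial e c * X i ^ p * X j ^ q) =
        pinPoly i j a b (monomial e c) * C a ^ p * C b ^ q := by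
      simp [pinPoly, hij.symm]
    rw [this, hpin, ← C_pow, ← C_pow, mul_comm, mul_comm (monomial e c), C_mul_monomial,
      C_mul_monomial]
    congr 1; ring
  have key : ∀ s t : ℕ, (e + Finsupp.single i p + Finsupp.single j q =
      m + Finsupp.single i s + Finsupp.single j t) ↔ (e = m ∧ p = s ∧ q = t) := by
    intro s t
    constructor
    · intro h
      have h1 := DFunLike.congr_fun h i
      have h2 := DFunLike.congr_fun h j
      simp [hij, hij.symm, hei, hej, hmi, hmj] at h1 h2
      subst h1 h2
      exact ⟨by simpa using h, rfl, rfl⟩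
    · rintro ⟨rfl, rfl, rfl⟩; rfl
  have k00 := key 0 0
  have k10 := key 1 0
  have k01 := key 0 1
  have k11 := key 1 1
  simp only [Finsupp.single_zero, add_zero] at k00 k10 k01
  have hp : p ≤ 1 := by simpa [hei, hij, hij.symm] using hdi
  have hq : q ≤ 1 := by simpa [hej, hij, hij.symm] using hdj
  rw [hpin2]
  simp only [coeff_monomial, k00, k10, k01, k11]
  by_cases hem : e = m
  · interval_cases p <;> interval_cases q <;> simp [hem] <;> ring
  · simp [hem]

open MvPolynomial in
lemma pin_aux {n : ℕ} (F : MvPolynomial (Fin n) (ZMod 2))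
    (hml : ∀ i : Fin n, F.degreeOf i ≤ 1) (i j : Fin n) (hij : i ≠ j) (a b : ZMod 2)
    (m : Fin n →₀ ℕ) (hmi : m i = 0) (hmj : m j = 0) :
    coeff m (pinPoly i j a b F) =
      coeff m F + a * coeff (m + Finsupp.single i 1) F
      + b * coeff (m + Finsupp.single j 1) F
      + a * b * coeff (m + Finsupp.single i 1 + Finsupp.single j 1) F := by
  have hF : F = ∑ d ∈ F.support, monomial d (coeff d F) := F.as_sum
  have hp : pinPoly i j a b F = ∑ d ∈ F.support, pinPoly i j a b (monomial d (coeff d F)) := by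
    conv_lhs => rw [hF]
    simp only [pinPoly, map_sum]
  have hc : ∀ u, coeff u F = ∑ d ∈ F.support, coeff u (monomial d (coeff d F)) := by
    intro u
    conv_lhs => rw [hF]
    rw [coeff_sum]
  rw [hp, coeff_sum, hc m, hc (m + Finsupp.single i 1), hc (m + Finsupp.single j 1),
    hc (m + Finsupp.single i 1 + Finsupp.single j 1), Finset.mul_sum, Finset.mul_sum,
    Finset.mul_sum, ← Finset.sum_add_distrib, ← Finset.sum_add_distrib,
    ← Finset.sum_add_distrib]
  refine Finset.sum_congr rfl fun d hd => ?_
  exact pin_aux_monomial i j hij a b _ m d hmi hmj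
    ((monomial_le_degreeOf i hd).trans (hml i)) ((monomial_le_degreeOf j hd).trans (hml j))

/-- Let `F ∈ ℤ₂[x_1, …, x_n]` be multilinear such that for all distinct `i, j`, both
`F^{00}_{ij} + F^{11}_{ij}` and `F^{01}_{ij} + F^{10}_{ij}` are constant polynomials.
Then `F` has total degree at most `2`; moreover if the total degree equals `2` then `F`
is a complete quadratic polynomial (every monomial `x_i x_j` occurs in `F`). -/
theorem multilinear_const_pins_totalDegree_le_two (n : ℕ)
    (F : MvPolynomial (Fin n) (ZMod 2))
    (hml : ∀ i : Fin n, F.degreeOf i ≤ 1)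
    (hconst : ∀ i j : Fin n, i ≠ j →
      (∃ c : ZMod 2, pinPoly i j 0 0 F + pinPoly i j 1 1 F = MvPolynomial.C c) ∧
      (∃ c : ZMod 2, pinPoly i j 0 1 F + pinPoly i j 1 0 F = MvPolynomial.C c)) :
    F.totalDegree ≤ 2 ∧
      (F.totalDegree = 2 → ∀ i j : Fin n, i ≠ j →
        F.coeff (Finsupp.single i 1 + Finsupp.single j 1) = 1) := by
  classical
  have h2 : ∀ x : ZMod 2, x + x = 0 := by decide
  -- consequences of the hypothesis on coefficients
  have hA : ∀ i j : Fin n, i ≠ j → ∀ m : Fin n →₀ ℕ, m i = 0 → m j = 0 → m ≠ 0 →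
      F.coeff (m + Finsupp.single i 1) = F.coeff (m + Finsupp.single j 1) ∧
      F.coeff (m + Finsupp.single i 1 + Finsupp.single j 1) = 0 := by
    intro i j hij m hmi hmj hm
    obtain ⟨⟨c, hc⟩, ⟨c', hc'⟩⟩ := hconst i j hij
    have e1 := congrArg (MvPolynomial.coeff m) hc
    have e2 := congrArg (MvPolynomial.coeff m) hc'
    rw [MvPolynomial.coeff_add, pin_aux F hml i j hij _ _ m hmi hmj,
      pin_aux F hml i j hij _ _ m hmi hmj, MvPolynomial.coeff_C, if_neg (Ne.symm hm)] at e1 e2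
    generalize MvPolynomial.coeff (m + Finsupp.single i 1 + Finsupp.single j 1) F = w at *
    generalize MvPolynomial.coeff (m + Finsupp.single i 1) F = u at *
    generalize MvPolynomial.coeff (m + Finsupp.single j 1) F = v at *
    generalize MvPolynomial.coeff m F = z at *
    clear hc hc' hconst hml
    revert u v w z
    decide
  have hle : ∀ d ∈ F.support, ∀ i, d i ≤ 1 := fun d hd i =>
    (MvPolynomial.monomial_le_degreeOf i hd).trans (hml i)
  -- a support monomial of degree at least two contains two distinct variables
  have hB : ∀ d ∈ F.support, 2 ≤ d.degree → ∃ i j, i ≠ j ∧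
      d = Finsupp.single i 1 + Finsupp.single j 1 := by
    intro d hd hdeg
    have hcard : 1 < d.support.card := by
      have : d.degree ≤ d.support.card := by
        rw [Finsupp.degree_apply, Finset.card_eq_sum_ones]
        exact Finset.sum_le_sum fun i _ => hle d hd i
      omega
    obtain ⟨i, hi, j, hj, hij⟩ := Finset.one_lt_card.mp hcard
    have hi1 : d i = 1 := by
      have := hle d hd i
      have := Finsupp.mem_support_iff.mp hi
      omega
    have hj1 : d j = 1 := by
      have := hle d hd j
      have := Finsupp.mem_support_iff.mp hj
      omega
    have hdec : d = (d.erase i).erase j + Finsupp.single i 1 + Finsupp.single j 1 := by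
      ext k
      by_cases h1 : k = i
      · subst h1
        simp [hij.symm, hi1, Finsupp.erase_ne hij]
      · by_cases h2 : k = j
        · subst h2
          simp [Ne.symm h1, hj1]
        · simp [Finsupp.erase_ne h1, Finsupp.erase_ne h2, Ne.symm h1, Ne.symm h2, h1, h2]
    refine ⟨i, j, hij, ?_⟩
    by_cases hm : (d.erase i).erase j = 0
    · rw [hm, zero_add] at hdec
      exact hdec
    · have := (hA i j hij _ (by simp [Finsupp.erase_ne hij]) (by simp) hm).2
      rw [← hdec] at this
      exact absurd this (MvPolynomial.mem_support_iff.mp hd)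
  constructor
  · refine Finset.sup_le ?_
    intro d hd
    by_contra hlt
    have hdeg : 2 < d.degree := by
      rw [Finsupp.degree_apply]
      simpa [Finsupp.sum] using hlt
    obtain ⟨i, j, hij, rfl⟩ := hB d hd hdeg.le
    simp at hdeg
  · intro htd
    obtain ⟨d, hd, hdd⟩ : ∃ d ∈ F.support, 2 ≤ d.degree := by
      by_contra! hcon
      have : F.totalDegree ≤ 1 := by
        refine Finset.sup_le ?_
        intro d hd
        have := hcon d hd
        rw [Finsupp.degree_apply] at this
        simp only [Finsupp.sum]
        omega
      omega
    obtain ⟨p, q, hpq, rfl⟩ := hB d hd hdd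
    have hbase : F.coeff (Finsupp.single p 1 + Finsupp.single q 1) = 1 := by
      have h0 := MvPolynomial.mem_support_iff.mp hd
      generalize MvPolynomial.coeff _ F = x at h0 ⊢
      clear * - h0
      revert x
      decide
    have hswap : ∀ k i j : Fin n, k ≠ i → k ≠ j →
        F.coeff (Finsupp.single k 1 + Finsupp.single i 1) =
        F.coeff (Finsupp.single k 1 + Finsupp.single j 1) := by
      intro k i j hki hkj
      by_cases hij : i = j
      · rw [hij]
      · exact (hA i j hij (Finsupp.single k 1) (by simp [hki, hki.symm])
          (by simp [hkj, hkj.symm]) (by simp)).1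
    intro i j hij
    by_cases hpi : p = i
    · subst hpi
      rw [hswap p j q hij hpq, hbase]
    · rw [hswap i j p hij (Ne.symm hpi), add_comm, hswap p i q hpi hpq, hbase]
end

section
/- Let F ∈ Z_2[x_1, …, x_n] be a multilinear polynomial such that for every pair of distinct indices {i, j}, both F^{00}_{ij} + F^{11}_{ij} and F^{01}_{ij} + F^{10}_{ij} have total degree at most 1. Then the total degree of F is at most 3; moreover, if the total degree of F equals 3, then F is a complete cubic polynomial. -/
open MvPolynomial in
lemma pin_monomial_coeff {n : ℕ} (i j : Fin n) (hij : i ≠ j) (a b : ZMod 2)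
    (m s : Fin n →₀ ℕ) (c : ZMod 2) (hmi : m i = 0) (hmj : m j = 0)
    (hsi : s i ≤ 1) (hsj : s j ≤ 1) :
    coeff m (pinPoly i j a b (monomial s c)) =
      coeff m (monomial s c) + a * coeff (m + Finsupp.single i 1) (monomial s c)
      + b * coeff (m + Finsupp.single j 1) (monomial s c)
      + a * b * coeff (m + Finsupp.single i 1 + Finsupp.single j 1) (monomial s c) := by
  obtain ⟨t, hti, htj, hs⟩ : ∃ t : Fin n →₀ ℕ, t i = 0 ∧ t j = 0 ∧
      s = t + Finsupp.single i (s i) + Finsupp.single j (s j) := by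
    refine ⟨(s.erase i).erase j, ?_, ?_, ?_⟩
    · simp [Finsupp.erase_apply]
    · simp
    · ext k
      by_cases h1 : k = i
      · subst h1; simp [Finsupp.erase_apply, Finsupp.single_apply, hij, hij.symm]
      · by_cases h2 : k = j
        · subst h2; simp [Finsupp.erase_apply, Finsupp.single_apply, hij, hij.symm]
        · simp [Finsupp.erase_apply, Finsupp.single_apply, h1, h2, Ne.symm h1, Ne.symm h2]
  have ht : pinPoly i j a b (monomial t c) = monomial t c := by
    unfold pinPoly
    rw [bind₁_monomial, monomial_eq, Finsupp.prod]
    congr 1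
    apply Finset.prod_congr rfl
    intro k hk
    have h1 : k ≠ i := by rintro rfl; simp [hti] at hk
    have h2 : k ≠ j := by rintro rfl; simp [htj] at hk
    simp [h1, h2]
  have hp : pinPoly i j a b (monomial s c) = monomial t c * C a ^ (s i) * C b ^ (s j) := by
    have : (monomial s c : MvPolynomial (Fin n) (ZMod 2))
        = monomial t c * X i ^ (s i) * X j ^ (s j) := by
      rw [X_pow_eq_monomial, X_pow_eq_monomial, monomial_mul, monomial_mul, ← hs]; simp
    rw [this]
    unfold pinPoly at ht ⊢
    rw [map_mul, map_mul, ht, map_pow, map_pow]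
    simp [hij.symm]
  rw [hp, ← C_pow, ← C_pow, mul_comm, coeff_C_mul, mul_comm (monomial t c), coeff_C_mul]
  simp only [coeff_monomial]
  have key : ∀ e f : ℕ, s = m + Finsupp.single i e + Finsupp.single j f ↔
      (t = m ∧ s i = e ∧ s j = f) := by
    intro e f
    constructor
    · intro h
      have h1 : s i = e := by
        have := DFunLike.congr_fun h i; simpa [hmi, Finsupp.single_apply, hij, hij.symm] using this
      have h2 : s j = f := by
        have := DFunLike.congr_fun h j; simpa [hmj, Finsupp.single_apply, hij, hij.symm] using this
      refine ⟨?_, h1, h2⟩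
      rw [hs, h1, h2] at h
      simpa using h
    · rintro ⟨rfl, rfl, rfl⟩; exact hs
  have k0 := key 0 0
  have k1 := key 1 0
  have k2 := key 0 1
  have k3 := key 1 1
  simp only [Finsupp.single_zero, add_zero] at k0 k1 k2 k3
  simp only [k0, k1, k2, k3]
  by_cases h : t = m
  · rcases Nat.le_one_iff_eq_zero_or_eq_one.1 hsi with h1 | h1 <;>
    rcases Nat.le_one_iff_eq_zero_or_eq_one.1 hsj with h2 | h2 <;> simp [h, h1, h2] <;> ring
  · simp [h]

open MvPolynomial in
lemma pin_coeff {n : ℕ} (i j : Fin n) (hij : i ≠ j) (a b : ZMod 2)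
    (F : MvPolynomial (Fin n) (ZMod 2)) (hml : ∀ i : Fin n, F.degreeOf i ≤ 1)
    (m : Fin n →₀ ℕ) (hmi : m i = 0) (hmj : m j = 0) :
    coeff m (pinPoly i j a b F) =
      coeff m F + a * coeff (m + Finsupp.single i 1) F
      + b * coeff (m + Finsupp.single j 1) F
      + a * b * coeff (m + Finsupp.single i 1 + Finsupp.single j 1) F := by
  have h : ∀ s ∈ F.support, ∀ k, s k ≤ 1 := fun s hs k =>
    (MvPolynomial.monomial_le_degreeOf k hs).trans (hml k)
  have hF := F.support_sum_monomial_coeff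
  have h1 : pinPoly i j a b F = ∑ s ∈ F.support, pinPoly i j a b (monomial s (coeff s F)) := by
    conv_lhs => rw [← hF]
    unfold pinPoly
    rw [map_sum]
  have h2 : ∀ d, coeff d F = ∑ s ∈ F.support, coeff d (monomial s (coeff s F)) := by
    intro d
    conv_lhs => rw [← hF]
    rw [coeff_sum]
  rw [h1, coeff_sum, h2 m, h2 (m + Finsupp.single i 1), h2 (m + Finsupp.single j 1),
    h2 (m + Finsupp.single i 1 + Finsupp.single j 1), Finset.mul_sum, Finset.mul_sum,
    Finset.mul_sum, ← Finset.sum_add_distrib, ← Finset.sum_add_distrib, ← Finset.sum_add_distrib]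
  exact Finset.sum_congr rfl fun s hs =>
    pin_monomial_coeff i j hij a b m s _ hmi hmj (h s hs i) (h s hs j)

lemma exists_split {n : ℕ} (s : Fin n →₀ ℕ) (hs : ∀ k, s k ≤ 1) (d : ℕ)
    (h : s.degree = d + 1) :
    ∃ (i : Fin n) (t : Fin n →₀ ℕ), s = t + Finsupp.single i 1 ∧ t i = 0 ∧
      (∀ k, t k ≤ 1) ∧ t.degree = d := by
  have : s ≠ 0 := by rintro rfl; simp at h
  obtain ⟨i, hi⟩ := Finsupp.ne_iff.1 this
  have h1 : s i = 1 := by have := hs i; simp at hi; omega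
  have e : s = s.erase i + Finsupp.single i 1 := by
    rw [← h1, Finsupp.erase_add_single]
  refine ⟨i, s.erase i, e, by simp, ?_, ?_⟩
  · intro k
    rw [Finsupp.erase_apply]; split_ifs
    · simp
    · exact hs k
  · rw [e, map_add, Finsupp.degree_single] at h
    omega

/-- Let `F ∈ ℤ₂[x_1, …, x_n]` be multilinear such that for all distinct `i, j`, both
`F^{00}_{ij} + F^{11}_{ij}` and `F^{01}_{ij} + F^{10}_{ij}` have total degree at
most `1`. Then `F` has total degree at most `3`; moreover if the total degree equals
`3` then `F` is a complete cubic polynomial (every monomial `x_i x_j x_k` occurs). -/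
theorem multilinear_linear_pins_totalDegree_le_three (n : ℕ)
    (F : MvPolynomial (Fin n) (ZMod 2))
    (hml : ∀ i : Fin n, F.degreeOf i ≤ 1)
    (hlin : ∀ i j : Fin n, i ≠ j →
      (pinPoly i j 0 0 F + pinPoly i j 1 1 F).totalDegree ≤ 1 ∧
      (pinPoly i j 0 1 F + pinPoly i j 1 0 F).totalDegree ≤ 1) :
    F.totalDegree ≤ 3 ∧
      (F.totalDegree = 3 → ∀ i j k : Fin n, i ≠ j → i ≠ k → j ≠ k →
        F.coeff (Finsupp.single i 1 + Finsupp.single j 1 + Finsupp.single k 1) = 1) := by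
  have hz : ∀ x y : ZMod 2, x + y = 0 → x = y := by decide
  have hzz : ∀ x y z w : ZMod 2, x + (x + y + z + w) = 0 → (x + z) + (x + y) = 0 → w = 0 := by
    decide
  have hzy : ∀ x y z : ZMod 2, (x + z) + (x + y) = 0 → y = z := by decide
  have hone : ∀ x : ZMod 2, x ≠ 0 → x = 1 := by decide
  have main : ∀ i j : Fin n, i ≠ j → ∀ m : Fin n →₀ ℕ, m i = 0 → m j = 0 → 2 ≤ m.degree →
      F.coeff (m + Finsupp.single i 1 + Finsupp.single j 1) = 0 ∧
      F.coeff (m + Finsupp.single i 1) = F.coeff (m + Finsupp.single j 1) := by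
    intro i j hij m hmi hmj hm
    obtain ⟨h1, h2⟩ := hlin i j hij
    have g1 := MvPolynomial.coeff_eq_zero_of_totalDegree_lt (d := m) (lt_of_le_of_lt h1 hm)
    have g2 := MvPolynomial.coeff_eq_zero_of_totalDegree_lt (d := m) (lt_of_le_of_lt h2 hm)
    rw [MvPolynomial.coeff_add, pin_coeff i j hij _ _ F hml m hmi hmj,
      pin_coeff i j hij _ _ F hml m hmi hmj] at g1 g2
    simp only [zero_mul, mul_zero, one_mul, add_zero] at g1 g2
    exact ⟨hzz _ _ _ _ g1 g2, hzy _ _ _ g2⟩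
  have hle : ∀ s ∈ F.support, ∀ k, s k ≤ 1 := fun s hs k =>
    (MvPolynomial.monomial_le_degreeOf k hs).trans (hml k)
  have hdeg : ∀ s ∈ F.support, s.degree ≤ 3 := by
    intro s hs
    by_contra hcon
    obtain ⟨d, hd⟩ : ∃ d, s.degree = (d + 1) + 1 := ⟨s.degree - 2, by omega⟩
    obtain ⟨i, t, rfl, hti, ht1, htd⟩ := exists_split s (hle s hs) _ hd
    obtain ⟨j, u, rfl, huj, hu1, hud⟩ := exists_split t ht1 _ htd
    have hij : j ≠ i := by rintro rfl; simp at hti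
    have hui : u i = 0 := by simpa [Finsupp.single_apply, hij] using hti
    have := (main j i hij u huj hui (by omega)).1
    exact (MvPolynomial.mem_support_iff.1 hs) this
  refine ⟨?_, ?_⟩
  · exact Finset.sup_le fun s hs => hdeg s hs
  · intro h3
    let K : Fin n → Fin n → Fin n → ZMod 2 := fun a b c =>
      F.coeff (Finsupp.single a 1 + Finsupp.single b 1 + Finsupp.single c 1)
    have K12 : ∀ a b c, K a b c = K b a c := by
      intro a b c; simp only [K]; rw [add_comm (Finsupp.single a 1)]
    have K23 : ∀ a b c, K a b c = K a c b := by
      intro a b c; simp only [K]; rw [add_right_comm]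
    have Ksw : ∀ a b i j, i ≠ a → i ≠ b → j ≠ a → j ≠ b → K a b i = K a b j := by
      intro a b i j h1 h2 h3 h4
      by_cases hij : i = j
      · rw [hij]
      · exact (main i j hij (Finsupp.single a 1 + Finsupp.single b 1)
          (by simp [Finsupp.single_apply, h1.symm, h2.symm])
          (by simp [Finsupp.single_apply, h3.symm, h4.symm]) (by simp [map_add])).2
    obtain ⟨a, b, c, hab, hac, hbc, hK⟩ : ∃ a b c, a ≠ b ∧ a ≠ c ∧ b ≠ c ∧ K a b c = 1 := by
      obtain ⟨s, hs, hsd⟩ : ∃ s ∈ F.support, s.degree = 3 := by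
        by_contra hcon
        push Not at hcon
        have : F.totalDegree ≤ 2 := Finset.sup_le fun s hs => by
          have h5 := hdeg s hs
          have h6 := hcon s hs
          change s.degree ≤ 2
          omega
        omega
      obtain ⟨c, t, rfl, htc, ht1, htd⟩ := exists_split s (hle s hs) 2 hsd
      obtain ⟨b, u, rfl, hub, hu1, hud⟩ := exists_split t ht1 1 htd
      obtain ⟨a, v, rfl, hva, hv1, hvd⟩ := exists_split u hu1 0 hud
      have hv : v = 0 := (Finsupp.degree_eq_zero_iff v).1 hvd
      subst hv
      refine ⟨a, b, c, ?_, ?_, ?_, ?_⟩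
      · rintro rfl; simp at hub
      · rintro rfl; simp at htc
      · rintro rfl; simp at htc
      · apply hone
        have := MvPolynomial.mem_support_iff.1 hs
        simpa [K] using this
    intro i j k hij hik hjk
    change K i j k = 1
    obtain ⟨b, c, hib, hic, hbc, hK⟩ : ∃ b c, i ≠ b ∧ i ≠ c ∧ b ≠ c ∧ K i b c = 1 := by
      by_cases h1 : i = a
      · subst h1; exact ⟨b, c, hab, hac, hbc, hK⟩
      by_cases h2 : i = b
      · subst h2; exact ⟨a, c, h1, hbc, hac, by rw [K12]; exact hK⟩
      by_cases h3 : i = c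
      · subst h3; exact ⟨a, b, h1, h2, hab, by rw [K12, K23]; exact hK⟩
      exact ⟨a, b, h1, h2, hab, by rw [K12, K23, Ksw a b i c h1 h2 hac.symm hbc.symm]; exact hK⟩
    obtain ⟨c, hic, hjc, hK⟩ : ∃ c, i ≠ c ∧ j ≠ c ∧ K i j c = 1 := by
      by_cases h1 : j = b
      · subst h1; exact ⟨c, hic, hbc, hK⟩
      by_cases h2 : j = c
      · subst h2; exact ⟨b, hib, h1, by rw [K23]; exact hK⟩
      exact ⟨b, hib, h1, by rw [K23, Ksw i b j c hij.symm h1 hic.symm hbc.symm]; exact hK⟩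
    rw [Ksw i j k c hik.symm hjk.symm hic.symm hjc.symm]; exact hK
end

section
/- If n ≥ 6 and F ∈ Z_2[x_1, …, x_n] is a complete quadratic multilinear polynomial, then F does not have a twice-linear 2-partition. -/
open MvPolynomial in
theorem second_diff_aux {n : ℕ} (F : MvPolynomial (Fin n) (ZMod 2))
    (hml : ∀ i : Fin n, F.degreeOf i ≤ 1) (i j : Fin n) (hij : i ≠ j) :
    eval (Pi.single i 1 + Pi.single j 1) F + eval (Pi.single i 1) F
      + eval (Pi.single j 1) F + eval 0 F
      = F.coeff (Finsupp.single i 1 + Finsupp.single j 1) := by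
  classical
  have hji : j ≠ i := hij.symm
  have key : ∀ d ∈ F.support,
      F.coeff d * (∏ k, (Pi.single i 1 + Pi.single j 1 : Fin n → ZMod 2) k ^ d k)
      + F.coeff d * (∏ k, (Pi.single i 1 : Fin n → ZMod 2) k ^ d k)
      + F.coeff d * (∏ k, (Pi.single j 1 : Fin n → ZMod 2) k ^ d k)
      + F.coeff d * (∏ k, (0 : Fin n → ZMod 2) k ^ d k)
      = if d = Finsupp.single i 1 + Finsupp.single j 1 then F.coeff d else 0 := by
    intro d hd
    have hle : ∀ k, d k ≤ 1 := fun k => (monomial_le_degreeOf k hd).trans (hml k)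
    by_cases hk : ∃ k, k ≠ i ∧ k ≠ j ∧ d k ≠ 0
    · obtain ⟨k, hki, hkj, hdk⟩ := hk
      have hz : ∀ x : Fin n → ZMod 2, x k = 0 → ∏ l, x l ^ d l = 0 := fun x hx =>
        Finset.prod_eq_zero (Finset.mem_univ k) (by rw [hx, zero_pow hdk])
      rw [hz _ (by simp [hki, hkj]), hz _ (by simp [hki]), hz _ (by simp [hkj]),
        hz _ (by simp), if_neg]
      · simp
      · rintro rfl
        apply hdk
        simp [hki, hkj]
    · push Not at hk
      have hp : ∀ x : Fin n → ZMod 2, ∏ l, x l ^ d l = x i ^ d i * x j ^ d j := by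
        intro x
        rw [← Finset.prod_pair (f := fun l => x l ^ d l) hij]
        symm
        apply Finset.prod_subset (Finset.subset_univ _)
        intro l _ hl
        simp only [Finset.mem_insert, Finset.mem_singleton, not_or] at hl
        simp [hk l hl.1 hl.2]
      have hiff : d = Finsupp.single i 1 + Finsupp.single j 1 ↔ (d i = 1 ∧ d j = 1) := by
        constructor
        · rintro rfl
          simp [hij, hji]
        · rintro ⟨h1, h2⟩
          ext l
          by_cases hli : l = i
          · subst hli; simp [h1, hij]
          · by_cases hlj : l = j
            · subst hlj; simp [h2, hji]
            · simp [hk l hli hlj, hli, hlj]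
      simp only [hp, hiff]
      have h1 := hle i
      have h2 := hle j
      generalize F.coeff d = c
      generalize d i = a at *
      generalize d j = b at *
      interval_cases a <;> interval_cases b <;> simp [hij, hji] <;> revert c <;> decide
  simp only [eval_eq', ← Finset.sum_add_distrib]
  rw [Finset.sum_congr rfl key, Finset.sum_ite_eq' ]
  split_ifs with h
  · rfl
  · exact (notMem_support_iff.mp h).symm

open MvPolynomial in
theorem linear_aux {n : ℕ} (L : MvPolynomial (Fin n) (ZMod 2))
    (h : L.totalDegree ≤ 1) (i j : Fin n) (hij : i ≠ j) :
    eval (Pi.single i 1 + Pi.single j 1) L + eval (Pi.single i 1) L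
      + eval (Pi.single j 1) L + eval 0 L = 0 := by
  rw [second_diff_aux L (fun k => (degreeOf_le_totalDegree L k).trans h) i j hij]
  by_contra hc
  have := le_totalDegree (mem_support_iff.mpr hc)
  rw [Finsupp.sum_add_index' (by simp) (by simp)] at this
  simp at this
  omega

theorem bilin_aux : ∀ p a b s q c d t : ZMod 2, s + a + b + p = 0 → t + c + d + q = 0 →
    s * t + a * c + b * d + p * q = (a + p) * (d + q) + (c + q) * (b + p) := by
  decide

theorem matrix_aux (A : Matrix (Fin 6) (Fin 4) (ZMod 2)) (B : Matrix (Fin 4) (Fin 6) (ZMod 2))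
    (h : A * B = Matrix.of fun i j => if i = j then 0 else 1) : False := by
  have h1 : (A * B) * (A * B) = 1 := by rw [h]; decide
  have h2 : (A * B).rank ≤ 4 := (Matrix.rank_mul_le_left A B).trans (by
    simpa using Matrix.rank_le_card_width A)
  have h3 := Matrix.rank_mul_le_left (A * B) (A * B)
  rw [h1, Matrix.rank_one] at h3
  simp at h3
  omega


/-- If `n ≥ 6` and `F ∈ ℤ₂[x_1, …, x_n]` is a complete quadratic multilinear
polynomial, then `F` does not have a twice-linear 2-partition: there are no
polynomials `L₁, L₂, L₃, L₄` of total degree at most `1` with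
`F = L₁·L₂ + L₃·L₄` (products reduced modulo `x_i² = x_i`; equivalently,
equality holds as functions on `(ℤ₂)ⁿ`). -/
theorem complete_quadratic_no_twice_linear_partition (n : ℕ) (hn : 6 ≤ n)
    (F : MvPolynomial (Fin n) (ZMod 2))
    (hml : ∀ i : Fin n, F.degreeOf i ≤ 1)
    (hdeg : F.totalDegree = 2)
    (hcomplete : ∀ i j : Fin n, i ≠ j →
      F.coeff (Finsupp.single i 1 + Finsupp.single j 1) = 1) :
    ¬ ∃ L₁ L₂ L₃ L₄ : MvPolynomial (Fin n) (ZMod 2),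
        L₁.totalDegree ≤ 1 ∧ L₂.totalDegree ≤ 1 ∧ L₃.totalDegree ≤ 1 ∧
        L₄.totalDegree ≤ 1 ∧
        ∀ x : Fin n → ZMod 2,
          MvPolynomial.eval x F =
            MvPolynomial.eval x L₁ * MvPolynomial.eval x L₂ +
              MvPolynomial.eval x L₃ * MvPolynomial.eval x L₄ := by
  rintro ⟨L₁, L₂, L₃, L₄, h1, h2, h3, h4, hF⟩
  let e : Fin 6 → Fin n := Fin.castLE hn
  have he : Function.Injective e := Fin.castLE_injective hn
  let v : MvPolynomial (Fin n) (ZMod 2) → Fin 6 → ZMod 2 := fun L i =>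
    MvPolynomial.eval (Pi.single (e i) 1) L + MvPolynomial.eval 0 L
  apply matrix_aux
    (Matrix.of fun i => ![v L₁ i, v L₂ i, v L₃ i, v L₄ i])
    (Matrix.of ![v L₂, v L₁, v L₄, v L₃])
  ext i j
  simp only [Matrix.mul_apply, Fin.sum_univ_four, Matrix.of_apply]
  change v L₁ i * v L₂ j + v L₂ i * v L₁ j + v L₃ i * v L₄ j + v L₄ i * v L₃ j = _
  split_ifs with hij
  · subst hij
    generalize v L₁ i = a
    generalize v L₂ i = b
    generalize v L₃ i = c
    generalize v L₄ i = d
    revert a b c d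
    decide
  · have hne : e i ≠ e j := fun h => hij (he h)
    have hs := second_diff_aux F hml (e i) (e j) hne
    rw [hcomplete _ _ hne] at hs
    simp only [hF] at hs
    have b1 := bilin_aux _ _ _ _ _ _ _ _ (linear_aux L₁ h1 _ _ hne) (linear_aux L₂ h2 _ _ hne)
    have b2 := bilin_aux _ _ _ _ _ _ _ _ (linear_aux L₃ h3 _ _ hne) (linear_aux L₄ h4 _ _ hne)
    rw [← hs]
    simp only [v]
    linear_combination -b1 - b2
end

section
/- A complete quadratic multilinear polynomial F ∈ Z_2[x_1, …, x_5] in 5 variables has a twice-linear 2-partition F = L_1·L_2 + L_3·L_4 if and only if, after a permutation of the variables, L_1·L_2 = (x_1 + x_2 + a)(x_2 + x_3 + b) and L_3·L_4 = (x_1 + x_2 + x_3 + x_4 + c)(x_1 + x_2 + x_3 + x_5 + d) for some constants a, b, c, d ∈ Z_2. -/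
/-- Pattern of the linear parts, up to a permutation of the variables. -/
def GoodPat (a b c d : Fin 5 → ZMod 2) : Prop :=
  ∃ i0 : Fin 5, (a i0 = 1 ∧ b i0 = 0) ∧ ∃ i1 : Fin 5, (a i1 = 1 ∧ b i1 = 1) ∧
  ∃ i2 : Fin 5, (a i2 = 0 ∧ b i2 = 1) ∧ (c i1 = c i0 ∧ d i1 = d i0 ∧ c i2 = c i0 ∧ d i2 = d i0) ∧
  ∃ i3 : Fin 5, (a i3 = 0 ∧ b i3 = 0) ∧ ∃ i4 : Fin 5, (a i4 = 0 ∧ b i4 = 0) ∧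
    ((c i0 = 1 ∧ d i0 = 1 ∧ c i3 = 1 ∧ d i3 = 0 ∧ c i4 = 0 ∧ d i4 = 1) ∨
     (c i0 = 1 ∧ d i0 = 0 ∧ c i3 = 1 ∧ d i3 = 1 ∧ c i4 = 0 ∧ d i4 = 1) ∨
     (c i0 = 0 ∧ d i0 = 1 ∧ c i3 = 1 ∧ d i3 = 1 ∧ c i4 = 1 ∧ d i4 = 0))

set_option synthInstance.maxHeartbeats 400000 in
set_option synthInstance.maxSize 4096 in
instance (a b c d : Fin 5 → ZMod 2) : Decidable (GoodPat a b c d) := by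
  unfold GoodPat; infer_instance

/-- The symplectic form on four-dimensional binary vectors. -/
def om (a b c d a' b' c' d' : ZMod 2) : ZMod 2 := a * b' + a' * b + c * d' + c' * d

set_option maxRecDepth 100000 in
set_option maxHeartbeats 1000000 in
set_option synthInstance.maxHeartbeats 1000000 in
set_option synthInstance.maxSize 4096 in
theorem pat_dec : ∀ a0 b0 c0 d0 a1 b1 c1 d1 : ZMod 2, om a0 b0 c0 d0 a1 b1 c1 d1 = 1 →
   ∀ a2 b2 c2 d2 : ZMod 2, om a0 b0 c0 d0 a2 b2 c2 d2 = 1 → om a1 b1 c1 d1 a2 b2 c2 d2 = 1 →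
   ∀ a3 b3 c3 d3 : ZMod 2, om a0 b0 c0 d0 a3 b3 c3 d3 = 1 → om a1 b1 c1 d1 a3 b3 c3 d3 = 1 →
     om a2 b2 c2 d2 a3 b3 c3 d3 = 1 →
   ∀ a4 b4 c4 d4 : ZMod 2, om a0 b0 c0 d0 a4 b4 c4 d4 = 1 → om a1 b1 c1 d1 a4 b4 c4 d4 = 1 →
     om a2 b2 c2 d2 a4 b4 c4 d4 = 1 → om a3 b3 c3 d3 a4 b4 c4 d4 = 1 →
   GoodPat ![a0,a1,a2,a3,a4] ![b0,b1,b2,b3,b4] ![c0,c1,c2,c3,c4] ![d0,d1,d2,d3,d4] ∨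
   GoodPat ![c0,c1,c2,c3,c4] ![d0,d1,d2,d3,d4] ![a0,a1,a2,a3,a4] ![b0,b1,b2,b3,b4] := by
  decide +kernel

theorem pat_of (a b c d : Fin 5 → ZMod 2)
    (h : ∀ i j, i ≠ j → om (a i) (b i) (c i) (d i) (a j) (b j) (c j) (d j) = 1) :
    GoodPat a b c d ∨ GoodPat c d a b := by
  have e : ∀ f : Fin 5 → ZMod 2, f = ![f 0, f 1, f 2, f 3, f 4] := by
    intro f; ext i; fin_cases i <;> rfl
  have := pat_dec (a 0) (b 0) (c 0) (d 0) (a 1) (b 1) (c 1) (d 1) (h 0 1 (by decide))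
    (a 2) (b 2) (c 2) (d 2) (h 0 2 (by decide)) (h 1 2 (by decide))
    (a 3) (b 3) (c 3) (d 3) (h 0 3 (by decide)) (h 1 3 (by decide)) (h 2 3 (by decide))
    (a 4) (b 4) (c 4) (d 4) (h 0 4 (by decide)) (h 1 4 (by decide)) (h 2 4 (by decide))
      (h 3 4 (by decide))
  rwa [← e a, ← e b, ← e c, ← e d] at this

theorem affine_of (L : MvPolynomial (Fin 5) (ZMod 2)) (h : L.totalDegree ≤ 1) :
    ∃ (k : ZMod 2) (a : Fin 5 → ZMod 2), ∀ x, MvPolynomial.eval x L = k + ∑ i, a i * x i := by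
  have key : ∀ s : Finset (Fin 5 →₀ ℕ), (∀ m ∈ s, m.degree ≤ 1) →
      ∃ (k : ZMod 2) (a : Fin 5 → ZMod 2), ∀ x,
        MvPolynomial.eval x (∑ m ∈ s, MvPolynomial.monomial m (L.coeff m))
          = k + ∑ i, a i * x i := by
    intro s hs
    refine Finset.sum_induction _ (fun P => ∃ (k : ZMod 2) (a : Fin 5 → ZMod 2), ∀ x,
        MvPolynomial.eval x P = k + ∑ i, a i * x i) ?_ ?_ ?_
    · rintro P Q ⟨k, a, hP⟩ ⟨l, b, hQ⟩
      refine ⟨k + l, a + b, fun x => ?_⟩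
      simp only [map_add, hP, hQ, Pi.add_apply, add_mul, Finset.sum_add_distrib]
      ring
    · exact ⟨0, 0, by simp⟩
    · intro m hm
      have h1 := hs m hm
      rcases Nat.le_one_iff_eq_zero_or_eq_one.1 h1 with h0 | h1
      · rw [Finsupp.degree_eq_zero_iff] at h0
        subst h0
        exact ⟨L.coeff 0, 0, by simp⟩
      · obtain ⟨i, hi⟩ : ∃ i, m = Finsupp.single i 1 := by
          rw [Finsupp.degree_eq_sum] at h1
          obtain ⟨i, hi⟩ : ∃ i, m i ≠ 0 := by
            by_contra! hne
            simp [hne] at h1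
          have hle := Finset.add_sum_erase Finset.univ (fun k => m k) (Finset.mem_univ i)
          have hz : ∑ k ∈ Finset.univ.erase i, m k = 0 := by omega
          rw [Finset.sum_eq_zero_iff] at hz
          refine ⟨i, Finsupp.ext fun k => ?_⟩
          by_cases hk : k = i
          · subst hk; simp; omega
          · rw [hz k (by simp [hk]), Finsupp.single_eq_of_ne hk]
        rw [hi]
        refine ⟨0, Pi.single i (L.coeff (Finsupp.single i 1)), fun x => ?_⟩
        simp [MvPolynomial.eval_monomial, Pi.single_apply]
  have := key L.support (fun m hm => by
    have := MvPolynomial.le_totalDegree hm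
    have h2 : m.degree = m.sum fun _ e => e := by
      rfl
    omega)
  rwa [MvPolynomial.support_sum_monomial_coeff] at this

theorem mono_dec : ∀ (i j : Fin 5), i ≠ j → ∀ g : Fin 5 → Fin 2,
    (∏ k, ((Pi.single i 1 + Pi.single j 1 : Fin 5 → ZMod 2) k) ^ (g k : ℕ))
    + (∏ k, ((Pi.single i 1 : Fin 5 → ZMod 2) k) ^ (g k : ℕ))
    + (∏ k, ((Pi.single j 1 : Fin 5 → ZMod 2) k) ^ (g k : ℕ))
    + (∏ k, ((0 : Fin 5 → ZMod 2) k) ^ (g k : ℕ))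
    = if (∀ k, (g k : ℕ) = (Pi.single i 1 + Pi.single j 1 : Fin 5 → ℕ) k) then 1 else 0 := by
  decide +kernel

theorem polar_F (F : MvPolynomial (Fin 5) (ZMod 2))
    (hml : ∀ i : Fin 5, F.degreeOf i ≤ 1)
    (hcomplete : ∀ i j : Fin 5, i ≠ j →
      F.coeff (Finsupp.single i 1 + Finsupp.single j 1) = 1) (i j : Fin 5) (hij : i ≠ j) :
    MvPolynomial.eval (Pi.single i 1 + Pi.single j 1) F + MvPolynomial.eval (Pi.single i 1) F
      + MvPolynomial.eval (Pi.single j 1) F + MvPolynomial.eval 0 F = 1 := by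
  simp only [MvPolynomial.eval_eq', ← Finset.sum_add_distrib, ← mul_add]
  have hm : ∀ m ∈ F.support, ∀ k, m k ≤ 1 := fun m hm k =>
    (MvPolynomial.degreeOf_le_iff.1 (hml k)) m hm
  rw [Finset.sum_congr rfl (g := fun m => F.coeff m *
    if m = Finsupp.single i 1 + Finsupp.single j 1 then 1 else 0)]
  · simp only [mul_ite, mul_one, mul_zero, Finset.sum_ite_eq']
    rw [if_pos, hcomplete i j hij]
    rw [MvPolynomial.mem_support_iff, hcomplete i j hij]
    decide
  · intro m hms
    congr 1
    have := mono_dec i j hij (fun k => ⟨m k, by have := hm m hms k; omega⟩)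
    simp only at this
    rw [this]
    congr 1
    simp only [eq_iff_iff, Finsupp.ext_iff]
    refine forall_congr' fun k => ?_
    simp [Finsupp.single_apply, Pi.single_apply, eq_comm]

theorem fin_dec1 : ∀ m l c e : ZMod 2, (m + c) * (l + e) = (m + c) * (m + l + (c + e + 1)) := by
  decide

theorem good_concl (a b c d : Fin 5 → ZMod 2) (ka kb kc kd : ZMod 2) (h : GoodPat a b c d) :
    ∃ (σ : Equiv.Perm (Fin 5)) (p q r s : ZMod 2),
      (∀ x : Fin 5 → ZMod 2, (ka + ∑ i, a i * x i) * (kb + ∑ i, b i * x i) =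
          (x (σ 0) + x (σ 1) + p) * (x (σ 1) + x (σ 2) + q)) ∧
      (∀ x : Fin 5 → ZMod 2, (kc + ∑ i, c i * x i) * (kd + ∑ i, d i * x i) =
          (x (σ 0) + x (σ 1) + x (σ 2) + x (σ 3) + r) *
                (x (σ 0) + x (σ 1) + x (σ 2) + x (σ 4) + s)) := by
  obtain ⟨i0, ⟨a0, b0⟩, i1, ⟨a1, b1⟩, i2, ⟨a2, b2⟩, ⟨c1, d1, c2, d2⟩, i3, ⟨a3, b3⟩,
    i4, ⟨a4, b4⟩, hh⟩ := h
  have n34 : i3 ≠ i4 := by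
    rintro rfl
    rcases hh with hh | hh | hh <;> obtain ⟨-, -, h1, h2, h3, h4⟩ := hh <;> simp_all
  have ninj : ∀ (f : Fin 5 → ZMod 2) u v, f u ≠ f v → u ≠ v := by
    rintro f u v h rfl; exact h rfl
  have n01 : i0 ≠ i1 := ninj b _ _ (by rw [b0, b1]; decide)
  have n02 : i0 ≠ i2 := ninj b _ _ (by rw [b0, b2]; decide)
  have n03 : i0 ≠ i3 := ninj a _ _ (by rw [a0, a3]; decide)
  have n04 : i0 ≠ i4 := ninj a _ _ (by rw [a0, a4]; decide)
  have n12 : i1 ≠ i2 := ninj a _ _ (by rw [a1, a2]; decide)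
  have n13 : i1 ≠ i3 := ninj a _ _ (by rw [a1, a3]; decide)
  have n14 : i1 ≠ i4 := ninj a _ _ (by rw [a1, a4]; decide)
  have n23 : i2 ≠ i3 := ninj b _ _ (by rw [b2, b3]; decide)
  have n24 : i2 ≠ i4 := ninj b _ _ (by rw [b2, b4]; decide)
  have inj : Function.Injective ![i0, i1, i2, i3, i4] := by
    intro u v huv
    fin_cases u <;> fin_cases v <;> first | rfl | (exfalso; simp_all)
  let σ : Equiv.Perm (Fin 5) := Equiv.ofBijective _ (Finite.injective_iff_bijective.1 inj)
  have s0 : σ 0 = i0 := rfl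
  have s1 : σ 1 = i1 := rfl
  have s2 : σ 2 = i2 := rfl
  have s3 : σ 3 = i3 := rfl
  have s4 : σ 4 = i4 := rfl
  have hs : ∀ f x : Fin 5 → ZMod 2, ∑ i, f i * x i =
      f i0 * x i0 + f i1 * x i1 + f i2 * x i2 + f i3 * x i3 + f i4 * x i4 := by
    intro f x
    rw [← Equiv.sum_comp σ, Fin.sum_univ_five, s0, s1, s2, s3, s4]
  have two : (2 : ZMod 2) = 0 := rfl
  have key : ∃ r s : ZMod 2, (∀ x : Fin 5 → ZMod 2,
      (kc + ∑ i, c i * x i) * (kd + ∑ i, d i * x i) =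
          (x i0 + x i1 + x i2 + x i3 + r) * (x i0 + x i1 + x i2 + x i4 + s)) := by
    rcases hh with ⟨h1, h2, h3, h4, h5, h6⟩ | ⟨h1, h2, h3, h4, h5, h6⟩ | ⟨h1, h2, h3, h4, h5, h6⟩
    · refine ⟨kc, kd, fun x => ?_⟩
      rw [hs, hs, c1, d1, c2, d2, h1, h2, h3, h4, h5, h6]
      ring
    · refine ⟨kc, kc + kd + 1, fun x => ?_⟩
      rw [hs, hs, c1, d1, c2, d2, h1, h2, h3, h4, h5, h6]
      have := fin_dec1 (x i0 + x i1 + x i2 + x i3) (x i3 + x i4) kc kd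
      linear_combination this + (x i0 + x i1 + x i2 + x i3 + kc) * x i3 * two
    · refine ⟨kd, kc + kd + 1, fun x => ?_⟩
      rw [hs, hs, c1, d1, c2, d2, h1, h2, h3, h4, h5, h6]
      have := fin_dec1 (x i0 + x i1 + x i2 + x i3) (x i3 + x i4) kd kc
      linear_combination this + (x i0 + x i1 + x i2 + x i3 + kd) * x i3 * two
  obtain ⟨r, s, hk⟩ := key
  refine ⟨σ, ka, kb, r, s, fun x => ?_, ?_⟩
  · rw [hs, hs, a0, a1, a2, a3, a4, b0, b1, b2, b3, b4, s0, s1, s2]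
    ring
  · rw [s0, s1, s2, s3, s4]
    exact hk

theorem deg_add {P Q : MvPolynomial (Fin 5) (ZMod 2)} (hP : P.totalDegree ≤ 1)
    (hQ : Q.totalDegree ≤ 1) : (P + Q).totalDegree ≤ 1 :=
  (MvPolynomial.totalDegree_add P Q).trans (max_le hP hQ)

theorem deg_X (i : Fin 5) : (MvPolynomial.X i : MvPolynomial (Fin 5) (ZMod 2)).totalDegree ≤ 1 := by
  simp

theorem deg_C (a : ZMod 2) : (MvPolynomial.C a : MvPolynomial (Fin 5) (ZMod 2)).totalDegree ≤ 1 := by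
  simp


/-- A complete quadratic multilinear polynomial `F ∈ ℤ₂[x_1, …, x_5]` in 5 variables
has a twice-linear 2-partition `F = L₁·L₂ + L₃·L₄` (products reduced modulo
`x_i² = x_i`, i.e. equality as functions on `(ℤ₂)⁵`) if and only if, after a
permutation of the variables, `L₁·L₂ = (x₁+x₂+a)(x₂+x₃+b)` and
`L₃·L₄ = (x₁+x₂+x₃+x₄+c)(x₁+x₂+x₃+x₅+d)` for some constants `a, b, c, d ∈ ℤ₂`. -/
theorem complete_quadratic_five_twice_linear_partition
    (F : MvPolynomial (Fin 5) (ZMod 2))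
    (hml : ∀ i : Fin 5, F.degreeOf i ≤ 1)
    (hdeg : F.totalDegree = 2)
    (hcomplete : ∀ i j : Fin 5, i ≠ j →
      F.coeff (Finsupp.single i 1 + Finsupp.single j 1) = 1) :
    ((∃ L₁ L₂ L₃ L₄ : MvPolynomial (Fin 5) (ZMod 2),
        L₁.totalDegree ≤ 1 ∧ L₂.totalDegree ≤ 1 ∧ L₃.totalDegree ≤ 1 ∧
        L₄.totalDegree ≤ 1 ∧
        ∀ x : Fin 5 → ZMod 2,
          MvPolynomial.eval x F =
            MvPolynomial.eval x L₁ * MvPolynomial.eval x L₂ +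
              MvPolynomial.eval x L₃ * MvPolynomial.eval x L₄) ↔
      (∃ (σ : Equiv.Perm (Fin 5)) (a b c d : ZMod 2),
        ∀ x : Fin 5 → ZMod 2,
          MvPolynomial.eval x F =
            (x (σ 0) + x (σ 1) + a) * (x (σ 1) + x (σ 2) + b) +
              (x (σ 0) + x (σ 1) + x (σ 2) + x (σ 3) + c) *
                (x (σ 0) + x (σ 1) + x (σ 2) + x (σ 4) + d))) ∧
    (∀ L₁ L₂ L₃ L₄ : MvPolynomial (Fin 5) (ZMod 2),
      L₁.totalDegree ≤ 1 → L₂.totalDegree ≤ 1 → L₃.totalDegree ≤ 1 →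
      L₄.totalDegree ≤ 1 →
      (∀ x : Fin 5 → ZMod 2,
        MvPolynomial.eval x F =
          MvPolynomial.eval x L₁ * MvPolynomial.eval x L₂ +
            MvPolynomial.eval x L₃ * MvPolynomial.eval x L₄) →
      ∃ (σ : Equiv.Perm (Fin 5)) (a b c d : ZMod 2),
        ((∀ x : Fin 5 → ZMod 2,
            MvPolynomial.eval x L₁ * MvPolynomial.eval x L₂ =
              (x (σ 0) + x (σ 1) + a) * (x (σ 1) + x (σ 2) + b)) ∧
          (∀ x : Fin 5 → ZMod 2,
            MvPolynomial.eval x L₃ * MvPolynomial.eval x L₄ =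
              (x (σ 0) + x (σ 1) + x (σ 2) + x (σ 3) + c) *
                (x (σ 0) + x (σ 1) + x (σ 2) + x (σ 4) + d))) ∨
        ((∀ x : Fin 5 → ZMod 2,
            MvPolynomial.eval x L₃ * MvPolynomial.eval x L₄ =
              (x (σ 0) + x (σ 1) + a) * (x (σ 1) + x (σ 2) + b)) ∧
          (∀ x : Fin 5 → ZMod 2,
            MvPolynomial.eval x L₁ * MvPolynomial.eval x L₂ =
              (x (σ 0) + x (σ 1) + x (σ 2) + x (σ 3) + c) *
                (x (σ 0) + x (σ 1) + x (σ 2) + x (σ 4) + d)))) := by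
  have main : ∀ L₁ L₂ L₃ L₄ : MvPolynomial (Fin 5) (ZMod 2),
      L₁.totalDegree ≤ 1 → L₂.totalDegree ≤ 1 → L₃.totalDegree ≤ 1 →
      L₄.totalDegree ≤ 1 →
      (∀ x : Fin 5 → ZMod 2,
        MvPolynomial.eval x F =
          MvPolynomial.eval x L₁ * MvPolynomial.eval x L₂ +
            MvPolynomial.eval x L₃ * MvPolynomial.eval x L₄) →
      ∃ (σ : Equiv.Perm (Fin 5)) (a b c d : ZMod 2),
        ((∀ x : Fin 5 → ZMod 2,
            MvPolynomial.eval x L₁ * MvPolynomial.eval x L₂ =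
              (x (σ 0) + x (σ 1) + a) * (x (σ 1) + x (σ 2) + b)) ∧
          (∀ x : Fin 5 → ZMod 2,
            MvPolynomial.eval x L₃ * MvPolynomial.eval x L₄ =
              (x (σ 0) + x (σ 1) + x (σ 2) + x (σ 3) + c) *
                (x (σ 0) + x (σ 1) + x (σ 2) + x (σ 4) + d))) ∨
        ((∀ x : Fin 5 → ZMod 2,
            MvPolynomial.eval x L₃ * MvPolynomial.eval x L₄ =
              (x (σ 0) + x (σ 1) + a) * (x (σ 1) + x (σ 2) + b)) ∧
          (∀ x : Fin 5 → ZMod 2,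
            MvPolynomial.eval x L₁ * MvPolynomial.eval x L₂ =
              (x (σ 0) + x (σ 1) + x (σ 2) + x (σ 3) + c) *
                (x (σ 0) + x (σ 1) + x (σ 2) + x (σ 4) + d))) := by
    intro L₁ L₂ L₃ L₄ h1 h2 h3 h4 hF
    obtain ⟨ka, a, ha⟩ := affine_of L₁ h1
    obtain ⟨kb, b, hb⟩ := affine_of L₂ h2
    obtain ⟨kc, c, hc⟩ := affine_of L₃ h3
    obtain ⟨kd, d, hd⟩ := affine_of L₄ h4
    have hom : ∀ i j, i ≠ j → om (a i) (b i) (c i) (d i) (a j) (b j) (c j) (d j) = 1 := by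
      intro i j hij
      have hp := polar_F F hml hcomplete i j hij
      have two : (2 : ZMod 2) = 0 := rfl
      have e1 : ∀ (f : Fin 5 → ZMod 2) (u : Fin 5),
          ∑ k, f k * (Pi.single u 1 : Fin 5 → ZMod 2) k = f u := by
        intro f u; simp [Pi.single_apply]
      have e2 : ∀ (f : Fin 5 → ZMod 2),
          ∑ k, f k * (Pi.single i 1 + Pi.single j 1 : Fin 5 → ZMod 2) k = f i + f j := by
        intro f; simp only [Pi.add_apply, mul_add, Finset.sum_add_distrib, e1]
      have e0 : ∀ (f : Fin 5 → ZMod 2), ∑ k, f k * (0 : Fin 5 → ZMod 2) k = 0 := by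
        intro f; simp
      simp only [hF, ha, hb, hc, hd, e0, e1, e2] at hp
      unfold om
      linear_combination hp - (2 * ka * kb + ka * b i + ka * b j + a i * kb + a j * kb
        + a i * b i + a j * b j + 2 * kc * kd + kc * d i + kc * d j + c i * kd + c j * kd
        + c i * d i + c j * d j) * two
    simp only [ha, hb, hc, hd]
    rcases pat_of a b c d hom with h | h
    · obtain ⟨σ, p, q, r, s, h1, h2⟩ := good_concl a b c d ka kb kc kd h
      exact ⟨σ, p, q, r, s, Or.inl ⟨h1, h2⟩⟩
    · obtain ⟨σ, p, q, r, s, h1, h2⟩ := good_concl c d a b kc kd ka kb h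
      exact ⟨σ, p, q, r, s, Or.inr ⟨h1, h2⟩⟩
  refine ⟨⟨?_, ?_⟩, main⟩
  · rintro ⟨L₁, L₂, L₃, L₄, h1, h2, h3, h4, hF⟩
    obtain ⟨σ, a, b, c, d, h | h⟩ := main L₁ L₂ L₃ L₄ h1 h2 h3 h4 hF
    · exact ⟨σ, a, b, c, d, fun x => by rw [hF, h.1, h.2]⟩
    · exact ⟨σ, a, b, c, d, fun x => by rw [hF, h.1, h.2, add_comm]⟩
  · rintro ⟨σ, a, b, c, d, h⟩
    refine ⟨.X (σ 0) + .X (σ 1) + .C a, .X (σ 1) + .X (σ 2) + .C b,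
      .X (σ 0) + .X (σ 1) + .X (σ 2) + .X (σ 3) + .C c,
      .X (σ 0) + .X (σ 1) + .X (σ 2) + .X (σ 4) + .C d, ?_, ?_, ?_, ?_, ?_⟩
    · exact deg_add (deg_add (deg_X _) (deg_X _)) (deg_C _)
    · exact deg_add (deg_add (deg_X _) (deg_X _)) (deg_C _)
    · exact deg_add (deg_add (deg_add (deg_add (deg_X _) (deg_X _)) (deg_X _)) (deg_X _)) (deg_C _)
    · exact deg_add (deg_add (deg_add (deg_add (deg_X _) (deg_X _)) (deg_X _)) (deg_X _)) (deg_C _)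
    intro x
    simp [h x]
end

section
/- Let n ≥ 4, let F ∈ Z_2[x_1, …, x_n] be a complete cubic multilinear polynomial, let L ∈ Z_2[x_2, …, x_n] have total degree at most 1, and let F'(x_2, …, x_{n+1}) = F(x_{n+1} + L, x_2, …, x_n), reduced to multilinear form. If F' is a complete cubic polynomial in the variables x_2, …, x_{n+1}, then: (i) if n ≥ 5, L is a constant (0 or 1); (ii) if n = 4, L is either a constant ε, or of the form x_i + x_j + ε for some pair {i, j} ⊆ {2, 3, 4} and some constant ε ∈ {0, 1}. -/
open MvPolynomial

theorem coeff_eq_sum_powerset {n : ℕ} (G : MvPolynomial (Fin n) (ZMod 2))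
    (hG : ∀ i, G.degreeOf i ≤ 1) (T : Finset (Fin n)) :
    ∑ S ∈ T.powerset, eval (fun v => if v ∈ S then (1 : ZMod 2) else 0) G =
      G.coeff (∑ i ∈ T, Finsupp.single i 1) := by
  classical
  have hT : ∀ v, (∑ i ∈ T, Finsupp.single i 1 : Fin n →₀ ℕ) v = if v ∈ T then 1 else 0 := by
    intro v
    simp [Finsupp.finsetSum_apply, Finsupp.single_apply]
  have hm : ∀ d ∈ G.support, ∀ v, d v ≤ 1 := by
    intro d hd v
    exact (degreeOf_le_iff.1 (hG v)) d hd
  simp only [eval_eq]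
  rw [Finset.sum_comm]
  have key : ∀ d ∈ G.support, (∑ S ∈ T.powerset, coeff d G *
      ∏ i ∈ d.support, (if i ∈ S then (1 : ZMod 2) else 0) ^ d i) =
      if d = ∑ i ∈ T, Finsupp.single i 1 then coeff d G else 0 := by
    intro d hd
    rw [← Finset.mul_sum]
    have h1 : ∀ S : Finset (Fin n), (∏ i ∈ d.support, (if i ∈ S then (1 : ZMod 2) else 0) ^ d i)
        = if d.support ⊆ S then 1 else 0 := by
      intro S
      split_ifs with h
      · exact Finset.prod_eq_one fun i hi => by simp [h hi]
      · obtain ⟨i, hi, hiS⟩ := Finset.not_subset.1 h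
        exact Finset.prod_eq_zero hi (by simp [hiS, Finsupp.mem_support_iff.1 hi])
    simp only [h1]
    rw [Finset.sum_boole]
    have h2 : (T.powerset.filter fun S => d.support ⊆ S) = Finset.Icc d.support T := by
      ext S; simp [Finset.mem_Icc, and_comm]
    rw [h2]
    have h3 : d = ∑ i ∈ T, Finsupp.single i 1 ↔ d.support = T := by
      constructor
      · intro h; ext v
        rw [Finsupp.mem_support_iff, h, hT]; simp
      · intro h; ext v
        rw [hT, ← h]
        have := hm d hd v
        by_cases hv : d v = 0 <;> simp [hv]
        omega
    by_cases hs : d.support = T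
    · rw [if_pos (h3.2 hs), hs]; simp
    · rw [if_neg (fun h => hs (h3.1 h))]
      by_cases hsub : d.support ⊆ T
      · have hlt := Finset.card_lt_card (Finset.ssubset_iff_subset_ne.2 ⟨hsub, hs⟩)
        rw [Finset.card_Icc_finset hsub]
        obtain ⟨k, hk⟩ : ∃ k, T.card - d.support.card = k + 1 :=
          ⟨T.card - d.support.card - 1, by omega⟩
        rw [hk, pow_succ]; push_cast
        have : (2 : ZMod 2) = 0 := rfl
        rw [this]; simp
      · rw [Finset.Icc_eq_empty hsub]; simp
  rw [Finset.sum_congr rfl key, Finset.sum_ite_eq']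
  split_ifs with h
  · rfl
  · exact (notMem_support_iff.1 h).symm

theorem affine_form {n : ℕ} (L : MvPolynomial (Fin n) (ZMod 2)) (h : L.totalDegree ≤ 1) :
    L = C (L.coeff 0) + ∑ i, C (L.coeff (Finsupp.single i 1)) * X i := by
  classical
  ext d
  simp only [coeff_add, coeff_C, coeff_sum, coeff_C_mul, coeff_X]
  by_cases h0 : d = 0
  · subst h0
    simp
  by_cases h1 : ∃ i, d = Finsupp.single i 1
  · obtain ⟨i, rfl⟩ := h1
    simp [Finsupp.single_left_inj]
    intro h; exact absurd h.symm h0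
  · have hz : L.coeff d = 0 := by
      apply coeff_eq_zero_of_totalDegree_lt
      refine lt_of_le_of_lt h ?_
      by_contra hc
      obtain ⟨i, hi⟩ := Finsupp.ne_iff.1 h0
      apply h1
      refine ⟨i, ?_⟩
      have hi' : i ∈ d.support := Finsupp.mem_support_iff.2 hi
      have hs := Finset.add_sum_erase d.support (fun i => d i) hi'
      simp at hi
      ext v
      by_cases hv : v = i
      · subst hv; simp; omega
      · rw [Finsupp.single_eq_of_ne hv]
        by_contra hne
        have : d v ≤ ∑ x ∈ d.support.erase i, d x :=
          Finset.single_le_sum (f := fun x => d x) (fun _ _ => Nat.zero_le _)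
            (Finset.mem_erase.2 ⟨hv, Finsupp.mem_support_iff.2 hne⟩)
        omega
    rw [hz, if_neg (fun h => h0 h.symm)]
    rw [Finset.sum_eq_zero]; · simp
    intro i _
    rw [if_neg (fun h => h1 ⟨i, h.symm⟩)]; simp

/-- The point with value `t, a, b, c` at the indices `p, i, j, k` and zero elsewhere. -/
def pt4 {n : ℕ} (p i j k : Fin n) (t a b c : ZMod 2) : Fin n → ZMod 2 := fun v =>
  if v = p then t else if v = i then a else if v = j then b else if v = k then c else 0

/-- The point with value `a, b, c` at the indices `i, j, k` and zero elsewhere. -/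
def pt3 {n : ℕ} (i j k : Fin n) (a b c : ZMod 2) : Fin n → ZMod 2 := fun v =>
  if v = i then a else if v = j then b else if v = k then c else 0

theorem sum3 {n : ℕ} (f : (Fin n → ZMod 2) → ZMod 2) (i j k : Fin n)
    (hij : i ≠ j) (hik : i ≠ k) (hjk : j ≠ k) :
    ∑ S ∈ ({i, j, k} : Finset (Fin n)).powerset, f (fun v => if v ∈ S then (1 : ZMod 2) else 0) =
      ∑ a : ZMod 2, ∑ b : ZMod 2, ∑ c : ZMod 2, f (pt3 i j k a b c) := by
  classical
  have e : ∀ (S : Finset (Fin n)) (a b c : ZMod 2), (∀ v, (if v ∈ S then (1 : ZMod 2) else 0) =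
      pt3 i j k a b c v) → f (fun v => if v ∈ S then (1 : ZMod 2) else 0) = f (pt3 i j k a b c) :=
    fun S a b c h => congrArg f (funext h)
  have u : ∀ g : ZMod 2 → ZMod 2, ∑ a, g a = g 0 + g 1 := fun g => Fin.sum_univ_two g
  rw [Finset.sum_powerset_insert (by simp [hij, hik]), Finset.sum_powerset_insert (by simp [hjk]),
    Finset.sum_powerset_insert (by simp [hjk]),
    show ({k} : Finset (Fin n)) = insert k ∅ from rfl]
  simp only [Finset.sum_powerset_insert (Finset.notMem_empty k), Finset.powerset_empty,
    Finset.sum_singleton, u]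
  rw [e ∅ 0 0 0, e (insert k ∅) 0 0 1, e (insert j ∅) 0 1 0, e (insert j (insert k ∅)) 0 1 1,
    e (insert i ∅) 1 0 0, e (insert i (insert k ∅)) 1 0 1, e (insert i (insert j ∅)) 1 1 0,
    e (insert i (insert j (insert k ∅))) 1 1 1]
  all_goals
    intro v
    simp only [pt3, Finset.mem_insert, Finset.notMem_empty]
    split_ifs <;> simp_all

theorem sum4 {n : ℕ} (f : (Fin n → ZMod 2) → ZMod 2) (p i j k : Fin n)
    (hpi : p ≠ i) (hpj : p ≠ j) (hpk : p ≠ k)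
    (hij : i ≠ j) (hik : i ≠ k) (hjk : j ≠ k) :
    ∑ S ∈ ({p, i, j, k} : Finset (Fin n)).powerset,
      f (fun v => if v ∈ S then (1 : ZMod 2) else 0) =
      ∑ t : ZMod 2, ∑ a : ZMod 2, ∑ b : ZMod 2, ∑ c : ZMod 2, f (pt4 p i j k t a b c) := by
  classical
  have u : ∀ g : ZMod 2 → ZMod 2, ∑ a, g a = g 0 + g 1 := fun g => Fin.sum_univ_two g
  rw [Finset.sum_powerset_insert (by simp [hpi, hpj, hpk]), u]
  congr 1
  · rw [sum3 f i j k hij hik hjk]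
    refine Finset.sum_congr rfl fun a _ => Finset.sum_congr rfl fun b _ =>
      Finset.sum_congr rfl fun c _ => congrArg f (funext fun v => ?_)
    simp only [pt3, pt4]
    split_ifs <;> simp_all
  · have := sum3 (fun y => f (Function.update y p 1)) i j k hij hik hjk
    refine Eq.trans (Finset.sum_congr rfl fun S _ => congrArg f (funext fun v => ?_))
      (this.trans (Finset.sum_congr rfl fun a _ => Finset.sum_congr rfl fun b _ =>
        Finset.sum_congr rfl fun c _ => congrArg f (funext fun v => ?_)))
    · by_cases h : v = p
      · subst h; simp
      · simp [h]
    · by_cases h : v = p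
      · subst h; simp [pt4]
      · simp [h, pt4, pt3]

theorem coeff3 {n : ℕ} (G : MvPolynomial (Fin n) (ZMod 2))
    (hG : ∀ i, G.degreeOf i ≤ 1) (i j k : Fin n)
    (hij : i ≠ j) (hik : i ≠ k) (hjk : j ≠ k) :
    ∑ a : ZMod 2, ∑ b : ZMod 2, ∑ c : ZMod 2, eval (pt3 i j k a b c) G =
      G.coeff (Finsupp.single i 1 + Finsupp.single j 1 + Finsupp.single k 1) := by
  rw [← sum3 (fun y => eval y G) i j k hij hik hjk, coeff_eq_sum_powerset G hG,
    Finset.sum_insert (by simp [hij, hik]), Finset.sum_insert (by simp [hjk]),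
    Finset.sum_singleton, add_assoc]

theorem coeff4 {n : ℕ} (G : MvPolynomial (Fin n) (ZMod 2))
    (hG : ∀ i, G.degreeOf i ≤ 1) (hG3 : G.totalDegree = 3) (p i j k : Fin n)
    (hpi : p ≠ i) (hpj : p ≠ j) (hpk : p ≠ k)
    (hij : i ≠ j) (hik : i ≠ k) (hjk : j ≠ k) :
    ∑ t : ZMod 2, ∑ a : ZMod 2, ∑ b : ZMod 2, ∑ c : ZMod 2, eval (pt4 p i j k t a b c) G = 0 := by
  rw [← sum4 (fun y => eval y G) p i j k hpi hpj hpk hij hik hjk, coeff_eq_sum_powerset G hG]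
  apply coeff_eq_zero_of_totalDegree_lt
  rw [hG3]
  have h : (∑ x ∈ ({p, i, j, k} : Finset (Fin n)), Finsupp.single x 1 : Fin n →₀ ℕ).degree = 4 := by
    rw [map_sum]; simp [hpi, hpj, hpk, hij, hik, hjk]
  rw [Finsupp.degree_apply] at h
  omega

theorem finite_part (g : ZMod 2 → ZMod 2 → ZMod 2 → ZMod 2 → ZMod 2) (ε l₁ l₂ l₃ : ZMod 2)
    (h4 : ∑ t, ∑ a, ∑ b, ∑ c, g t a b c = 0)
    (h0 : ∑ a, ∑ b, ∑ c, g 0 a b c = 1)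
    (h1 : ∑ t, ∑ b, ∑ c, g t 0 b c = 1)
    (h2 : ∑ t, ∑ a, ∑ c, g t a 0 c = 1)
    (h3 : ∑ t, ∑ a, ∑ b, g t a b 0 = 1)
    (h' : ∑ a, ∑ b, ∑ c, g (ε + (l₁ * a + l₂ * b + l₃ * c)) a b c = 1) :
    l₁ + l₂ + l₃ = 0 := by
  have u : ∀ g : ZMod 2 → ZMod 2, ∑ a, g a = g 0 + g 1 := fun g => Fin.sum_univ_two g
  have lin : ∀ (r : ZMod 2 → ZMod 2) (t : ZMod 2), r t = r 0 + t * (r 1 + r 0) := by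
    intro r t
    have two : ∀ x : ZMod 2, x + x = 0 := by decide
    have ht : t = 0 ∨ t = 1 := by revert t; decide
    rcases ht with rfl | rfl
    · simp
    · linear_combination - two (r 0)
  have h'' : ∑ a, ∑ b, ∑ c, (g 0 a b c +
      (ε + (l₁ * a + l₂ * b + l₃ * c)) * (g 1 a b c + g 0 a b c)) = 1 := by
    refine Eq.trans ?_ h'
    exact Finset.sum_congr rfl fun a _ => Finset.sum_congr rfl fun b _ =>
      Finset.sum_congr rfl fun c _ => (lin (fun t => g t a b c) _).symm
  clear h' lin
  simp only [u] at h0 h1 h2 h3 h4 h''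
  linear_combination h0 + ε * h4 + l₁ * (h4 - h1) + l₂ * (h4 - h2) + l₃ * (h4 - h3) - h''

theorem pt3_eq0 {n : ℕ} (p i j k : Fin n) (hi : p ≠ i) (hj : p ≠ j) (hk : p ≠ k) (a b c : ZMod 2) :
    pt3 i j k a b c = pt4 p i j k 0 a b c := by
  funext v; simp only [pt3, pt4]; split_ifs <;> simp_all

theorem pt3_eq1 {n : ℕ} (p i j k : Fin n) (hij : i ≠ j) (hik : i ≠ k) (a b c : ZMod 2) :
    pt3 p j k a b c = pt4 p i j k a 0 b c := by
  funext v; simp only [pt3, pt4]; split_ifs <;> simp_all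

theorem pt3_eq2 {n : ℕ} (p i j k : Fin n) (hjk : j ≠ k) (a b c : ZMod 2) :
    pt3 p i k a b c = pt4 p i j k a b 0 c := by
  funext v; simp only [pt3, pt4]; split_ifs <;> simp_all

theorem pt3_eq3 {n : ℕ} (p i j k : Fin n) (a b c : ZMod 2) :
    pt3 p i j a b c = pt4 p i j k a b c 0 := by
  funext v; simp only [pt3, pt4]; split_ifs <;> simp_all

theorem triple_zero (m : ℕ)
    (F L F' : MvPolynomial (Fin (m + 4)) (ZMod 2))
    (hFml : ∀ i : Fin (m + 4), F.degreeOf i ≤ 1)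
    (hF3 : F.totalDegree = 3)
    (hFcc : ∀ i j k : Fin (m + 4), i ≠ j → i ≠ k → j ≠ k →
      F.coeff (Finsupp.single i 1 + Finsupp.single j 1 + Finsupp.single k 1) = 1)
    (hLdeg : L.totalDegree ≤ 1)
    (hF'ml : ∀ i : Fin (m + 4), F'.degreeOf i ≤ 1)
    (hF'def : ∀ y : Fin (m + 4) → ZMod 2,
      MvPolynomial.eval y F' =
        MvPolynomial.eval (fun i : Fin (m + 4) =>
          if i = 0 then
            y ⟨m + 3, Nat.lt_succ_self _⟩ +
              MvPolynomial.eval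
                (fun j : Fin (m + 4) =>
                  if j = 0 then 0
                  else y ⟨j.1 - 1, Nat.lt_of_le_of_lt (Nat.sub_le _ _) j.2⟩) L
          else y ⟨i.1 - 1, Nat.lt_of_le_of_lt (Nat.sub_le _ _) i.2⟩) F)
    (hF'cc : ∀ i j k : Fin (m + 4), i ≠ j → i ≠ k → j ≠ k →
      F'.coeff (Finsupp.single i 1 + Finsupp.single j 1 + Finsupp.single k 1) = 1)
    (i j k : Fin (m + 4)) (hi : i ≠ 0) (hj : j ≠ 0) (hk : k ≠ 0)
    (hij : i ≠ j) (hik : i ≠ k) (hjk : j ≠ k) :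
    L.coeff (Finsupp.single i 1) + L.coeff (Finsupp.single j 1) + L.coeff (Finsupp.single k 1)
      = 0 := by
  have pred : ∀ v : Fin (m + 4), v ≠ 0 → 1 ≤ v.1 := fun v hv =>
    Nat.one_le_iff_ne_zero.2 fun h => hv (Fin.ext h)
  have hi1 := pred i hi
  have hj1 := pred j hj
  have hk1 := pred k hk
  have hijv : i.1 ≠ j.1 := fun h => hij (Fin.ext h)
  have hikv : i.1 ≠ k.1 := fun h => hik (Fin.ext h)
  have hjkv : j.1 ≠ k.1 := fun h => hjk (Fin.ext h)
  let i' : Fin (m + 4) := ⟨i.1 - 1, by omega⟩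
  let j' : Fin (m + 4) := ⟨j.1 - 1, by omega⟩
  let k' : Fin (m + 4) := ⟨k.1 - 1, by omega⟩
  have hij' : i' ≠ j' := fun h => by simp [i', j'] at h; omega
  have hik' : i' ≠ k' := fun h => by simp [i', k'] at h; omega
  have hjk' : j' ≠ k' := fun h => by simp [j', k'] at h; omega
  have hsub : ∀ a b c : ZMod 2, ∀ v : Fin (m + 4), v ≠ 0 →
      pt3 i' j' k' a b c ⟨v.1 - 1, Nat.lt_of_le_of_lt (Nat.sub_le _ _) v.2⟩ =
        pt3 i j k a b c v := by
    intro a b c v hv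
    have hv1 := pred v hv
    have e : ∀ w : Fin (m + 4), 1 ≤ w.1 → (v.1 - 1 = w.1 - 1 ↔ v.1 = w.1) := by
      intro w hw; omega
    simp only [pt3, i', j', k', Fin.ext_iff, e i hi1, e j hj1, e k hk1]
  have hlast : ∀ a b c : ZMod 2, pt3 i' j' k' a b c ⟨m + 3, Nat.lt_succ_self _⟩ = 0 := by
    intro a b c
    have e : ∀ w : Fin (m + 4), 1 ≤ w.1 → ¬ (m + 3 = w.1 - 1) := by
      intro w hw; omega
    simp only [pt3, i', j', k', Fin.ext_iff, e i hi1, e j hj1, e k hk1, if_false]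
  have hL : ∀ a b c : ZMod 2, eval (pt3 i j k a b c) L = L.coeff 0 +
      (L.coeff (Finsupp.single i 1) * a + L.coeff (Finsupp.single j 1) * b
        + L.coeff (Finsupp.single k 1) * c) := by
    intro a b c
    conv_lhs => rw [affine_form L hLdeg]
    simp only [map_add, map_sum, map_mul, eval_C, eval_X]
    congr 1
    rw [← Finset.sum_subset (Finset.subset_univ ({i, j, k} : Finset (Fin (m + 4))))]
    · rw [Finset.sum_insert (by simp [hij, hik]), Finset.sum_insert (by simp [hjk]),
        Finset.sum_singleton]
      simp [pt3, hij.symm, hik.symm, hjk.symm, add_assoc]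
    · intro v _ hv
      simp only [Finset.mem_insert, Finset.mem_singleton, not_or] at hv
      simp [pt3, hv]
  have hev : ∀ a b c : ZMod 2, eval (pt3 i' j' k' a b c) F' =
      eval (pt4 0 i j k (L.coeff 0 +
      (L.coeff (Finsupp.single i 1) * a + L.coeff (Finsupp.single j 1) * b
        + L.coeff (Finsupp.single k 1) * c)) a b c) F := by
    intro a b c
    rw [hF'def, ← hL]
    congr 2
    funext v
    by_cases hv : v = 0
    · simp only [hv, if_true, pt4]
      rw [hlast, zero_add]
      congr 2
      funext w
      by_cases hw : w = 0
      · simp [hw, pt3, hi.symm, hj.symm, hk.symm]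
      · rw [if_neg hw, hsub a b c w hw]
    · rw [if_neg hv, hsub a b c v hv]
      simp [pt4, pt3, hv]
  have e0 := pt3_eq0 0 i j k hi.symm hj.symm hk.symm
  have e1 := pt3_eq1 0 i j k hij hik
  have e2 := pt3_eq2 0 i j k hjk
  have e3 := pt3_eq3 0 i j k
  refine finite_part (fun t a b c => eval (pt4 0 i j k t a b c) F) (L.coeff 0) _ _ _
    (coeff4 F hFml hF3 0 i j k hi.symm hj.symm hk.symm hij hik hjk) ?_ ?_ ?_ ?_ ?_
  · simp only [← e0]; rw [coeff3 F hFml i j k hij hik hjk, hFcc _ _ _ hij hik hjk]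
  · simp only [← e1]
    rw [coeff3 F hFml 0 j k hj.symm hk.symm hjk, hFcc _ _ _ hj.symm hk.symm hjk]
  · simp only [← e2]
    rw [coeff3 F hFml 0 i k hi.symm hk.symm hik, hFcc _ _ _ hi.symm hk.symm hik]
  · simp only [← e3]
    rw [coeff3 F hFml 0 i j hi.symm hj.symm hij, hFcc _ _ _ hi.symm hj.symm hij]
  · simp only [← hev]
    rw [coeff3 F' hF'ml i' j' k' hij' hik' hjk']
    exact hF'cc i' j' k' (by assumption) (by assumption) (by assumption)


/-- Let `F ∈ ℤ₂[x_1, …, x_n]` (with `n = m + 4 ≥ 4` variables, variable `x_{i+1}`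
having index `i`) be a complete cubic multilinear polynomial, let
`L ∈ ℤ₂[x_2, …, x_n]` have total degree at most `1`, and let
`F'(x_2, …, x_{n+1}) = F(x_{n+1} + L, x_2, …, x_n)` (reduced to multilinear form;
here `F'` is the multilinear polynomial, in `n` variables where index `i` stands for
`x_{i+2}`, whose values agree with the substituted function).  If `F'` is a complete
cubic polynomial in the variables `x_2, …, x_{n+1}`, then: if `n ≥ 5`, `L` is a
constant; and if `n = 4`, `L` is either a constant `ε` or of the form
`x_i + x_j + ε` for some pair `{i, j} ⊆ {2, 3, 4}` and some `ε ∈ ℤ₂`. -/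
theorem complete_cubic_substitution (m : ℕ)
    (F L F' : MvPolynomial (Fin (m + 4)) (ZMod 2))
    (hFml : ∀ i : Fin (m + 4), F.degreeOf i ≤ 1)
    (hF3 : F.totalDegree = 3)
    (hFcc : ∀ i j k : Fin (m + 4), i ≠ j → i ≠ k → j ≠ k →
      F.coeff (Finsupp.single i 1 + Finsupp.single j 1 + Finsupp.single k 1) = 1)
    (hLdeg : L.totalDegree ≤ 1) (hL0 : L.degreeOf 0 = 0)
    (hF'ml : ∀ i : Fin (m + 4), F'.degreeOf i ≤ 1)
    (hF'def : ∀ y : Fin (m + 4) → ZMod 2,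
      MvPolynomial.eval y F' =
        MvPolynomial.eval (fun i : Fin (m + 4) =>
          if i = 0 then
            y ⟨m + 3, by omega⟩ +
              MvPolynomial.eval
                (fun j : Fin (m + 4) =>
                  if j = 0 then 0
                  else y ⟨j.1 - 1, Nat.lt_of_le_of_lt (Nat.sub_le _ _) j.2⟩) L
          else y ⟨i.1 - 1, Nat.lt_of_le_of_lt (Nat.sub_le _ _) i.2⟩) F)
    (hF'3 : F'.totalDegree = 3)
    (hF'cc : ∀ i j k : Fin (m + 4), i ≠ j → i ≠ k → j ≠ k →
      F'.coeff (Finsupp.single i 1 + Finsupp.single j 1 + Finsupp.single k 1) = 1) :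
    (5 ≤ m + 4 → ∃ ε : ZMod 2, L = MvPolynomial.C ε) ∧
    (m + 4 = 4 →
      (∃ ε : ZMod 2, L = MvPolynomial.C ε) ∨
      ∃ (i j : Fin (m + 4)) (ε : ZMod 2), i ≠ 0 ∧ j ≠ 0 ∧ i ≠ j ∧
        L = MvPolynomial.X i + MvPolynomial.X j + MvPolynomial.C ε) := by

  have key := triple_zero m F L F' hFml hF3 hFcc hLdeg hF'ml hF'def hF'cc
  have haff := affine_form L hLdeg
  have hl0 : L.coeff (Finsupp.single 0 1) = 0 := by
    by_contra h
    have := (degreeOf_le_iff.1 hL0.le) (Finsupp.single 0 1) (mem_support_iff.2 h)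
    simp at this
  generalize hl : (fun i => L.coeff (Finsupp.single i 1)) = l at *
  have hl' : ∀ i, L.coeff (Finsupp.single i 1) = l i := fun i => congrFun hl i
  simp only [hl'] at key haff hl0
  have b2 : ∀ x : ZMod 2, x = 0 ∨ x = 1 := by decide
  have z : (∀ i, l i = 0) → ∃ ε : ZMod 2, L = C ε := by
    intro h
    refine ⟨L.coeff 0, ?_⟩
    simpa [h] using haff
  constructor
  · intro hm
    apply z
    intro i
    by_cases hi : i = 0
    · rw [hi, hl0]
    have hc : 3 ≤ (Finset.univ \ {0, i} : Finset (Fin (m + 4))).card := by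
      have := Finset.le_card_sdiff ({0, i} : Finset (Fin (m + 4))) Finset.univ
      have h2 := Finset.card_le_two (a := (0 : Fin (m + 4))) (b := i)
      simp only [Finset.card_univ, Fintype.card_fin] at this
      omega
    obtain ⟨a, b, c, ha, hb, hc, hab, hac, hbc⟩ := Finset.two_lt_card_iff.1 hc
    simp only [Finset.mem_sdiff, Finset.mem_univ, true_and, Finset.mem_insert,
      Finset.mem_singleton, not_or] at ha hb hc
    have k2 := key i b c hi hb.1 hc.1 (Ne.symm hb.2) (Ne.symm hc.2) hbc
    have k3 := key i a c hi ha.1 hc.1 (Ne.symm ha.2) (Ne.symm hc.2) hac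
    have k4 := key i a b hi ha.1 hb.1 (Ne.symm ha.2) (Ne.symm hb.2) hab
    have two : (2 : ZMod 2) = 0 := rfl
    linear_combination k2 + k3 + k4 - (l i + l a + l b + l c) * two
  · intro hm
    obtain rfl : m = 0 := by omega
    have k1 := key 1 2 3 (by decide) (by decide) (by decide) (by decide) (by decide) (by decide)
    rw [Fin.sum_univ_four] at haff
    rw [hl0] at haff
    rcases b2 (l 1) with h1 | h1 <;> rcases b2 (l 2) with h2 | h2 <;>
      rcases b2 (l 3) with h3 | h3 <;> rw [h1, h2, h3] at k1 haff
    · left; exact ⟨L.coeff 0, by simpa using haff⟩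
    · exact absurd k1 (by decide)
    · exact absurd k1 (by decide)
    · right
      exact ⟨2, 3, L.coeff 0, by decide, by decide, by decide, by
        rw [haff]; simp; ring⟩
    · exact absurd k1 (by decide)
    · right
      exact ⟨1, 3, L.coeff 0, by decide, by decide, by decide, by
        rw [haff]; simp; ring⟩
    · right
      exact ⟨1, 2, L.coeff 0, by decide, by decide, by decide, by
        rw [haff]; simp; ring⟩
    · exact absurd k1 (by decide)
end

section
/- Let b_1(x_1, x_2) and b_2(y_1, y_2) be binary signatures in Ô. Suppose that connecting the variable x_1 of b_1 with the variable y_1 of b_2 via ≠_2 — that is, forming the binary signature c(x_2, y_2) = b_1(0, x_2)·b_2(1, y_2) + b_1(1, x_2)·b_2(0, y_2) — yields c = λ·≠_2 for some nonzero real λ. Then b_2 is a nonzero constant multiple of b_1, and moreover connecting the variable x_2 of b_1 with the variable y_2 of b_2 via ≠_2 — that is, forming d(x_1, y_1) = b_1(x_1, 0)·b_2(y_1, 1) + b_1(x_1, 1)·b_2(y_1, 0) — yields d = λ·≠_2. -/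
namespace Stmt12

/-- A binary signature satisfies ARS: `conj (f x y) = f x̄ ȳ`. -/
def ARS2 (f : Bool → Bool → ℂ) : Prop :=
  ∀ x y : Bool, (starRingEnd ℂ) (f x y) = f (!x) (!y)

/-- A binary signature has parity: its support lies in the even-weight inputs
`{00, 11}` or in the odd-weight inputs `{01, 10}` (the zero signature counts). -/
def HasParity2 (f : Bool → Bool → ℂ) : Prop :=
  (∀ x y : Bool, x ≠ y → f x y = 0) ∨ (∀ x y : Bool, x = y → f x y = 0)

/-- Let `b₁(x₁,x₂)` and `b₂(y₁,y₂)` be binary signatures in `Ô` (satisfying ARS and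
having parity).  If connecting `x₁` of `b₁` with `y₁` of `b₂` via `≠₂` yields
`λ·≠₂` for some nonzero real `λ`, then `b₂` is a nonzero constant multiple of `b₁`,
and connecting `x₂` of `b₁` with `y₂` of `b₂` via `≠₂` also yields `λ·≠₂`. -/
theorem bell_connect (b₁ b₂ : Bool → Bool → ℂ)
    (hb₁ : ARS2 b₁ ∧ HasParity2 b₁) (hb₂ : ARS2 b₂ ∧ HasParity2 b₂)
    (lam : ℝ) (hlam : lam ≠ 0)
    (hc : ∀ x y : Bool,
      b₁ false x * b₂ true y + b₁ true x * b₂ false y =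
        if x = y then 0 else (lam : ℂ)) :
    (∃ μ : ℂ, μ ≠ 0 ∧ ∀ x y : Bool, b₂ x y = μ * b₁ x y) ∧
    (∀ x y : Bool,
      b₁ x false * b₂ y true + b₁ x true * b₂ y false =
        if x = y then 0 else (lam : ℂ)) := by
  have hl : (lam : ℂ) ≠ 0 := by exact_mod_cast hlam
  have key : ∀ p q r s : ℂ, p * s = lam → q * r = lam →
      (lam / (p * q) : ℂ) ≠ 0 ∧ r = lam / (p * q) * p ∧ s = lam / (p * q) * q := by
    intro p q r s h1 h2
    have hp : p ≠ 0 := by rintro rfl; simp at h1; exact hl h1.symm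
    have hq : q ≠ 0 := by rintro rfl; simp at h2; exact hl h2.symm
    refine ⟨div_ne_zero hl (mul_ne_zero hp hq), ?_, ?_⟩
    · rw [← h2]; field_simp
    · rw [← h1]; field_simp
  have h01 := hc false true
  have h10 := hc true false
  obtain ⟨-, h1 | h1⟩ := hb₁ <;> obtain ⟨-, h2 | h2⟩ := hb₂
  · have a1 := h1 false true (by simp)
    have a2 := h1 true false (by simp)
    have a3 := h2 false true (by simp)
    have a4 := h2 true false (by simp)
    simp [a1, a2, a3, a4] at h01 h10
    obtain ⟨k0, k1, k2⟩ := key _ _ _ _ h01 h10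
    refine ⟨⟨_, k0, ?_⟩, ?_⟩
    · rintro (_ | _) (_ | _)
      · exact k1
      · simp [a1, a3]
      · simp [a2, a4]
      · exact k2
    · rintro (_ | _) (_ | _) <;> simp [a1, a2, a3, a4, h01, h10]
  · exfalso
    simp [h1 true false (by simp), h2 true true rfl] at h01
    exact hl h01.symm
  · exfalso
    simp [h1 false false rfl, h2 false true (by simp)] at h01
    exact hl h01.symm
  · have a1 := h1 false false rfl
    have a2 := h1 true true rfl
    have a3 := h2 false false rfl
    have a4 := h2 true true rfl
    simp [a1, a2, a3, a4] at h01 h10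
    obtain ⟨k0, k1, k2⟩ := key _ _ _ _ h10 h01
    refine ⟨⟨_, k0, ?_⟩, ?_⟩
    · rintro (_ | _) (_ | _)
      · simp [a1, a3]
      · exact k1
      · exact k2
      · simp [a2, a4]
    · rintro (_ | _) (_ | _) <;> simp [a1, a2, a3, a4, h01, h10]

end Stmt12
end

section
/- Let f : {0,1}^n → ℂ be a signature of arity n ≥ 3 and let α ∈ {0,1}^n with f(α) ≠ 0 and Hamming weight wt(α) = k, where k ≠ 0 and k ≠ n. Then there exist distinct indices i, j and an assignment β to the remaining n − 2 variables with wt(β) = k − 1 such that (∂_{ij} f)(β) ≠ 0. In particular, if ∂_{ij} f is identically zero for every pair of distinct indices {i, j}, then f(α) = 0 for every α with 0 < wt(α) < n. -/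
namespace Stmt13

/-- The Hamming weight of an assignment. -/
def hw {ι : Type*} [Fintype ι] (x : ι → Bool) : ℕ :=
  (Finset.univ.filter fun i => x i = true).card

/-- The merge `∂_{ij} f = f^{01}_{ij} + f^{10}_{ij}` of `f` at the distinct indices
`i, j` via the binary disequality, a signature on the remaining variables. -/
def merge {n : ℕ} (f : (Fin n → Bool) → ℂ) (i j : Fin n)
    (y : {k : Fin n // k ≠ i ∧ k ≠ j} → Bool) : ℂ :=
  f (fun k => if h : k = i then false else if h' : k = j then true else y ⟨k, h, h'⟩) +
    f (fun k => if h : k = i then true else if h' : k = j then false else y ⟨k, h, h'⟩)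

theorem hw_swap {n : ℕ} (g : Fin n → Bool) (i j : Fin n) :
    hw (fun l => g (Equiv.swap i j l)) = hw g := by
  unfold hw
  apply Finset.card_bij (fun l _ => Equiv.swap i j l)
  · intro a ha
    simpa using ha
  · intro a _ b _ h
    exact (Equiv.swap i j).injective h
  · intro b hb
    refine ⟨Equiv.swap i j b, ?_, by simp⟩
    simpa using hb

theorem hw_restrict {n : ℕ} (g : Fin n → Bool) (i j t : Fin n) (hg : g i ≠ g j)
    (ht : g t = true) (hij : t = i ∨ t = j) :
    hw (fun l : {l : Fin n // l ≠ i ∧ l ≠ j} => g l.1) = hw g - 1 := by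
  unfold hw
  rw [← Finset.card_erase_of_mem (a := t) (by simpa using ht),
    ← Finset.card_map (Function.Embedding.subtype _)]
  congr 1
  ext l
  simp only [Finset.mem_map, Finset.mem_filter, Finset.mem_univ, true_and, Finset.mem_erase,
    Function.Embedding.subtype_apply, Subtype.exists, exists_and_left, exists_prop]
  constructor
  · rintro ⟨a, ha, h, rfl⟩
    refine ⟨?_, ha⟩
    rcases hij with rfl | rfl
    · exact h.1
    · exact h.2
  · rintro ⟨h1, h2⟩
    refine ⟨l, h2, ?_, rfl⟩
    rcases hij with rfl | rfl
    · refine ⟨h1, ?_⟩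
      rintro rfl
      exact hg (ht.trans h2.symm)
    · refine ⟨?_, h1⟩
      rintro rfl
      exact hg (h2.trans ht.symm)

theorem merge_restrict {n : ℕ} (f : (Fin n → Bool) → ℂ) (g : Fin n → Bool) (i j : Fin n)
    (hi : g i = true) (hj : g j = false) :
    merge f i j (fun l => g l.1) = f g + f (fun l => g (Equiv.swap i j l)) := by
  unfold merge
  rw [add_comm]
  congr 2
  · funext l
    by_cases h : l = i
    · subst h; simp [hi]
    · by_cases h' : l = j
      · subst h'; simp [h, hj]
      · simp [h, h']
  · funext l
    by_cases h : l = i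
    · subst h; simp [hj]
    · by_cases h' : l = j
      · subst h'; simp [h, hi]
      · simp [h, h', Equiv.swap_apply_of_ne_of_ne h h']

theorem first_part (n : ℕ) (hn : 3 ≤ n) (f : (Fin n → Bool) → ℂ)
    (α : Fin n → Bool) (k : ℕ) (hf : f α ≠ 0) (hk : hw α = k) (h0 : k ≠ 0) (h1 : k ≠ n) :
      ∃ i j : Fin n, i ≠ j ∧
        ∃ β : {l : Fin n // l ≠ i ∧ l ≠ j} → Bool,
          hw β = k - 1 ∧ merge f i j β ≠ 0 := by
  by_contra hcon
  have key : ∀ (g : Fin n → Bool) (i j : Fin n), hw g = k → g i = true → g j = false →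
      f g + f (fun l => g (Equiv.swap i j l)) = 0 := by
    intro g i j hg hi hj
    by_contra hne
    have hij : i ≠ j := by rintro rfl; simp [hi] at hj
    refine hcon ⟨i, j, hij, fun l => g l.1, ?_, ?_⟩
    · rw [hw_restrict g i j i (by simp [hi, hj]) hi (Or.inl rfl), hg]
    · rwa [merge_restrict f g i j hi hj]
  obtain ⟨i, hi⟩ : ∃ i, α i = true := by
    by_contra h
    push Not at h
    apply h0
    rw [← hk]
    simp [hw, h]
  obtain ⟨j, hj⟩ : ∃ j, α j = false := by
    by_contra h
    push Not at h
    apply h1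
    rw [← hk]
    have h' : ∀ j, α j = true := fun j => by simpa using h j
    simp [hw, h']
  have hij : i ≠ j := by rintro rfl; simp [hi] at hj
  obtain ⟨c, hc⟩ : ∃ c, c ∉ ({i, j} : Finset (Fin n)) := by
    by_contra h
    push Not at h
    have h2 : (Finset.univ : Finset (Fin n)).card ≤ ({i, j} : Finset (Fin n)).card :=
      Finset.card_le_card fun x _ => h x
    have h3 : ({i, j} : Finset (Fin n)).card ≤ 2 := Finset.card_le_two
    simp only [Finset.card_univ, Fintype.card_fin] at h2
    omega
  simp only [Finset.mem_insert, Finset.mem_singleton, not_or] at hc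
  obtain ⟨hci, hcj⟩ := hc
  have e1 := key α i j hk hi hj
  have hA : hw (fun l => α (Equiv.swap i j l)) = k := (hw_swap α i j).trans hk
  have hAc : α (Equiv.swap i j c) = α c := by rw [Equiv.swap_apply_of_ne_of_ne hci hcj]
  cases hcv : α c with
  | true =>
    have e2 := key α c j hk hcv hj
    have e3 := key _ c i hA (by simpa [hAc] using hcv) (by simpa using hj)
    have hB : (fun l => α (Equiv.swap i j (Equiv.swap c i l))) =
        fun l => α (Equiv.swap c j l) := by
      funext l
      simp only [Equiv.swap_apply_def]
      grind
    rw [hB] at e3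
    apply hf
    linear_combination (e1 + e2 - e3) / 2
  | false =>
    have e2 := key α i c hk hi hcv
    have e3 := key _ j c hA (by simpa using hi) (by simpa [hAc] using hcv)
    have hB : (fun l => α (Equiv.swap i j (Equiv.swap j c l))) =
        fun l => α (Equiv.swap i c l) := by
      funext l
      simp only [Equiv.swap_apply_def]
      grind
    rw [hB] at e3
    apply hf
    linear_combination (e1 + e2 - e3) / 2

/-- Let `f` be a signature of arity `n ≥ 3` and `α` an input with `f α ≠ 0` and
Hamming weight `k ∉ {0, n}`.  Then there are distinct indices `i, j` and an input `β`
of the merged signature `∂_{ij} f` of weight `k - 1` with `(∂_{ij} f)(β) ≠ 0`.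
In particular, if all merges `∂_{ij} f` vanish identically, then `f` vanishes on all
inputs of weight strictly between `0` and `n`. -/
theorem merge_nonzero_of_nonzero (n : ℕ) (hn : 3 ≤ n) (f : (Fin n → Bool) → ℂ) :
    (∀ (α : Fin n → Bool) (k : ℕ), f α ≠ 0 → hw α = k → k ≠ 0 → k ≠ n →
      ∃ i j : Fin n, i ≠ j ∧
        ∃ β : {l : Fin n // l ≠ i ∧ l ≠ j} → Bool,
          hw β = k - 1 ∧ merge f i j β ≠ 0) ∧
    ((∀ i j : Fin n, i ≠ j → ∀ y, merge f i j y = 0) →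
      ∀ α : Fin n → Bool, 0 < hw α → hw α < n → f α = 0) := by
  refine ⟨fun α k => first_part n hn f α k, ?_⟩
  intro h α h0 h1
  by_contra hf
  obtain ⟨i, j, hij, β, -, hβ⟩ := first_part n hn f α _ hf rfl h0.ne' h1.ne
  exact hβ (h i j hij β)

end Stmt13
end

section
/- Let f : {0,1}^n → ℂ (n ≥ 4) satisfy ARS and second order orthogonality with constant λ. Then: (i) for all pairwise distinct indices i, j, k and every (a, b, c) ∈ {0,1}^3, the sum over assignments y to the remaining n − 3 variables of |f^{abc}_{ijk}(y)|^2 equals λ/2; (ii) for all pairwise distinct indices i, j, k, ℓ, the four quantities ∑_y |f^{abcd}_{ijkℓ}(y)|^2 for (a,b,c,d) ∈ {0000, 0011, 1100, 1111} are all equal, and likewise the four quantities for (a,b,c,d) ∈ {0001, 0010, 1101, 1110} are all equal. -/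
namespace Stmt14

/-- The signature obtained from `f` by pinning `x_i := a`, `x_j := b`. -/
def pin2 {n : ℕ} (f : (Fin n → Bool) → ℂ) (i j : Fin n) (a b : Bool)
    (y : {k : Fin n // k ≠ i ∧ k ≠ j} → Bool) : ℂ :=
  f fun k => if h : k = i then a else if h' : k = j then b else y ⟨k, h, h'⟩

/-- The signature obtained from `f` by pinning `x_i := a`, `x_j := b`, `x_k := c`. -/
def pin3 {n : ℕ} (f : (Fin n → Bool) → ℂ) (i j k : Fin n) (a b c : Bool)
    (y : {l : Fin n // l ≠ i ∧ l ≠ j ∧ l ≠ k} → Bool) : ℂ :=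
  f fun l => if h1 : l = i then a else if h2 : l = j then b else
    if h3 : l = k then c else y ⟨l, h1, h2, h3⟩

/-- The signature obtained from `f` by pinning `x_i := a`, `x_j := b`, `x_k := c`,
`x_l := d`. -/
def pin4 {n : ℕ} (f : (Fin n → Bool) → ℂ) (i j k l : Fin n) (a b c d : Bool)
    (y : {m : Fin n // m ≠ i ∧ m ≠ j ∧ m ≠ k ∧ m ≠ l} → Bool) : ℂ :=
  f fun m => if h1 : m = i then a else if h2 : m = j then b else
    if h3 : m = k then c else if h4 : m = l then d else y ⟨m, h1, h2, h3, h4⟩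

/-- Arrow reversal symmetry: `conj (f α) = f ᾱ`. -/
def ARS {n : ℕ} (f : (Fin n → Bool) → ℂ) : Prop :=
  ∀ x : Fin n → Bool, (starRingEnd ℂ) (f x) = f fun i => !(x i)

/-- Second order orthogonality with constant `lam`. -/
def SecondOrth {n : ℕ} (f : (Fin n → Bool) → ℂ) (lam : ℝ) : Prop :=
  lam ≠ 0 ∧
    ∀ i j : Fin n, i ≠ j →
      (∀ a b : Bool, (∑ y, Complex.normSq (pin2 f i j a b y)) = lam) ∧
      (∀ a b c d : Bool, (a, b) ≠ (c, d) →
        (∑ y, pin2 f i j a b y * (starRingEnd ℂ) (pin2 f i j c d y)) = 0)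

lemma sum_pin2 {n : ℕ} (f : (Fin n → Bool) → ℂ) (i j : Fin n) (hij : i ≠ j) (a b : Bool) :
    (∑ y, Complex.normSq (pin2 f i j a b y)) =
      ∑ x with x i = a ∧ x j = b, Complex.normSq (f x) := by
  refine Finset.sum_bij'
    (fun y _ k => if h : k = i then a else if h' : k = j then b else y ⟨k, h, h'⟩)
    (fun x _ k => x k.1) ?_ ?_ ?_ ?_ ?_
  · intro y _
    simp [hij.symm]
  · intro x _
    simp
  · intro y _
    funext k
    simp [k.2.1, k.2.2]
  · intro x hx
    simp only [Finset.mem_filter, Finset.mem_univ, true_and] at hx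
    funext k
    grind
  · intro y _
    rfl

lemma sum_pin3 {n : ℕ} (f : (Fin n → Bool) → ℂ) (i j k : Fin n) (hij : i ≠ j) (hik : i ≠ k)
    (hjk : j ≠ k) (a b c : Bool) :
    (∑ y, Complex.normSq (pin3 f i j k a b c y)) =
      ∑ x with x i = a ∧ x j = b ∧ x k = c, Complex.normSq (f x) := by
  refine Finset.sum_bij'
    (fun y _ l => if h1 : l = i then a else if h2 : l = j then b else
      if h3 : l = k then c else y ⟨l, h1, h2, h3⟩)
    (fun x _ k => x k.1) ?_ ?_ ?_ ?_ ?_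
  · intro y _
    simp [hij.symm, hik.symm, hjk.symm]
  · intro x _
    simp
  · intro y _
    funext k
    simp [k.2.1, k.2.2.1, k.2.2.2]
  · intro x hx
    simp only [Finset.mem_filter, Finset.mem_univ, true_and] at hx
    funext k
    grind
  · intro y _
    rfl

lemma sum_pin4 {n : ℕ} (f : (Fin n → Bool) → ℂ) (i j k l : Fin n) (hij : i ≠ j) (hik : i ≠ k)
    (hil : i ≠ l) (hjk : j ≠ k) (hjl : j ≠ l) (hkl : k ≠ l) (a b c d : Bool) :
    (∑ y, Complex.normSq (pin4 f i j k l a b c d y)) =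
      ∑ x with x i = a ∧ x j = b ∧ x k = c ∧ x l = d, Complex.normSq (f x) := by
  refine Finset.sum_bij'
    (fun y _ m => if h1 : m = i then a else if h2 : m = j then b else
      if h3 : m = k then c else if h4 : m = l then d else y ⟨m, h1, h2, h3, h4⟩)
    (fun x _ k => x k.1) ?_ ?_ ?_ ?_ ?_
  · intro y _
    simp [hij.symm, hik.symm, hjk.symm, hil.symm, hjl.symm, hkl.symm]
  · intro x _
    simp
  · intro y _
    funext k
    simp [k.2.1, k.2.2.1, k.2.2.2.1, k.2.2.2.2]
  · intro x hx
    simp only [Finset.mem_filter, Finset.mem_univ, true_and] at hx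
    funext k
    grind
  · intro y _
    rfl

/-- Splitting a filtered sum according to the value of the variable `k`. -/
lemma sum_split {n : ℕ} (F : (Fin n → Bool) → ℝ) (p q r : (Fin n → Bool) → Prop)
    [DecidablePred p] [DecidablePred q] [DecidablePred r] (k : Fin n) (c : Bool)
    (hq : ∀ x, q x ↔ p x ∧ x k = c) (hr : ∀ x, r x ↔ p x ∧ x k = !c) :
    (∑ x with q x, F x) + (∑ x with r x, F x) = ∑ x with p x, F x := by
  rw [Finset.sum_filter, Finset.sum_filter, Finset.sum_filter, ← Finset.sum_add_distrib]
  refine Finset.sum_congr rfl fun x _ => ?_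
  have h1 := hq x
  have h2 := hr x
  cases h : x k <;> cases c <;> by_cases h3 : p x <;> simp_all

lemma sum_compl {n : ℕ} (f : (Fin n → Bool) → ℂ) (hars : ARS f) (i j k : Fin n) (a b c : Bool) :
    (∑ x with x i = a ∧ x j = b ∧ x k = c, Complex.normSq (f x)) =
      ∑ x with x i = (!a) ∧ x j = (!b) ∧ x k = (!c), Complex.normSq (f x) := by
  refine Finset.sum_bij' (fun x _ m => !(x m)) (fun x _ m => !(x m)) ?_ ?_ ?_ ?_ ?_
  · intro x hx
    simpa using hx
  · intro x hx
    simp only [Finset.mem_filter, Finset.mem_univ, true_and] at hx ⊢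
    simp [hx.1, hx.2.1, hx.2.2]
  · intro x _
    simp
  · intro x _
    simp
  · intro x _
    rw [← hars x, Complex.normSq_conj]

lemma triple {n : ℕ} (f : (Fin n → Bool) → ℂ) (lam : ℝ) (hars : ARS f) (horth : SecondOrth f lam)
    (i j k : Fin n) (hij : i ≠ j) (hik : i ≠ k) (hjk : j ≠ k) (a b c : Bool) :
    (∑ x with x i = a ∧ x j = b ∧ x k = c, Complex.normSq (f x)) = lam / 2 := by
  have e1 := (horth.2 i j hij).1 a b
  have e2 := (horth.2 i k hik).1 a (!c)
  have e3 := (horth.2 j k hjk).1 (!b) (!c)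
  rw [sum_pin2 f i j hij] at e1
  rw [sum_pin2 f i k hik] at e2
  rw [sum_pin2 f j k hjk] at e3
  have s1 := sum_split (fun x => Complex.normSq (f x)) (fun x => x i = a ∧ x j = b)
    (fun x => x i = a ∧ x j = b ∧ x k = c) (fun x => x i = a ∧ x j = b ∧ x k = !c) k c
    (by intro x; tauto) (by intro x; tauto)
  have s2 := sum_split (fun x => Complex.normSq (f x)) (fun x => x i = a ∧ x k = !c)
    (fun x => x i = a ∧ x j = b ∧ x k = !c) (fun x => x i = a ∧ x j = (!b) ∧ x k = !c) j b
    (by intro x; tauto) (by intro x; tauto)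
  have s3 := sum_split (fun x => Complex.normSq (f x)) (fun x => x j = (!b) ∧ x k = !c)
    (fun x => x i = a ∧ x j = (!b) ∧ x k = !c) (fun x => x i = (!a) ∧ x j = (!b) ∧ x k = !c) i a
    (by intro x; tauto) (by intro x; tauto)
  have s4 := sum_compl f hars i j k a b c
  linarith

/-- Let `f` (of arity `n ≥ 4`) satisfy ARS and second order orthogonality with
constant `lam`.  Then (i) all triple pins have norm-square sum `lam / 2`, and (ii) for
pairwise distinct `i, j, k, l`, the norm-square sums of the quadruple pins indexed by
`{0000, 0011, 1100, 1111}` are all equal, and likewise those indexed by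
`{0001, 0010, 1101, 1110}` are all equal. -/
theorem secondOrth_consequences (n : ℕ) (hn : 4 ≤ n) (f : (Fin n → Bool) → ℂ)
    (lam : ℝ) (hars : ARS f) (horth : SecondOrth f lam) :
    (∀ i j k : Fin n, i ≠ j → i ≠ k → j ≠ k → ∀ a b c : Bool,
      (∑ y, Complex.normSq (pin3 f i j k a b c y)) = lam / 2) ∧
    (∀ i j k l : Fin n, i ≠ j → i ≠ k → i ≠ l → j ≠ k → j ≠ l → k ≠ l →
      ((∑ y, Complex.normSq (pin4 f i j k l false false false false y)) =
          (∑ y, Complex.normSq (pin4 f i j k l false false true true y)) ∧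
        (∑ y, Complex.normSq (pin4 f i j k l false false false false y)) =
          (∑ y, Complex.normSq (pin4 f i j k l true true false false y)) ∧
        (∑ y, Complex.normSq (pin4 f i j k l false false false false y)) =
          (∑ y, Complex.normSq (pin4 f i j k l true true true true y))) ∧
      ((∑ y, Complex.normSq (pin4 f i j k l false false false true y)) =
          (∑ y, Complex.normSq (pin4 f i j k l false false true false y)) ∧
        (∑ y, Complex.normSq (pin4 f i j k l false false false true y)) =
          (∑ y, Complex.normSq (pin4 f i j k l true true false true y)) ∧
        (∑ y, Complex.normSq (pin4 f i j k l false false false true y)) =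
          (∑ y, Complex.normSq (pin4 f i j k l true true true false y)))) := by
  refine ⟨?_, ?_⟩
  · intro i j k hij hik hjk a b c
    rw [sum_pin3 f i j k hij hik hjk, triple f lam hars horth i j k hij hik hjk]
  · intro i j k l hij hik hil hjk hjl hkl
    simp only [sum_pin4 f i j k l hij hik hil hjk hjl hkl]
    -- flipping any one of the pinned bits replaces `S` by `lam / 2 - S`
    have fl : ∀ a b c d : Bool,
        (∑ x with x i = a ∧ x j = b ∧ x k = c ∧ x l = d, Complex.normSq (f x)) +
          (∑ x with x i = a ∧ x j = b ∧ x k = c ∧ x l = !d, Complex.normSq (f x)) = lam / 2 := by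
      intro a b c d
      rw [← triple f lam hars horth i j k hij hik hjk a b c]
      exact sum_split _ _ _ _ l d (by intro x; tauto) (by intro x; tauto)
    have fk : ∀ a b c d : Bool,
        (∑ x with x i = a ∧ x j = b ∧ x k = c ∧ x l = d, Complex.normSq (f x)) +
          (∑ x with x i = a ∧ x j = b ∧ x k = (!c) ∧ x l = d, Complex.normSq (f x)) = lam / 2 := by
      intro a b c d
      rw [← triple f lam hars horth i j l hij hil hjl a b d]
      exact sum_split _ _ _ _ k c (by intro x; tauto) (by intro x; tauto)
    have fj : ∀ a b c d : Bool,
        (∑ x with x i = a ∧ x j = b ∧ x k = c ∧ x l = d, Complex.normSq (f x)) +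
          (∑ x with x i = a ∧ x j = (!b) ∧ x k = c ∧ x l = d, Complex.normSq (f x)) = lam / 2 := by
      intro a b c d
      rw [← triple f lam hars horth i k l hik hil hkl a c d]
      exact sum_split _ _ _ _ j b (by intro x; tauto) (by intro x; tauto)
    have fi : ∀ a b c d : Bool,
        (∑ x with x i = a ∧ x j = b ∧ x k = c ∧ x l = d, Complex.normSq (f x)) +
          (∑ x with x i = (!a) ∧ x j = b ∧ x k = c ∧ x l = d, Complex.normSq (f x)) = lam / 2 := by
      intro a b c d
      rw [← triple f lam hars horth j k l hjk hjl hkl b c d]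
      exact sum_split _ _ _ _ i a (by intro x; tauto) (by intro x; tauto)
    generalize hS : (fun a b c d : Bool =>
      ∑ x with x i = a ∧ x j = b ∧ x k = c ∧ x l = d, Complex.normSq (f x)) = S
    have hS' : ∀ a b c d : Bool,
        (∑ x with x i = a ∧ x j = b ∧ x k = c ∧ x l = d, Complex.normSq (f x)) = S a b c d := by
      intro a b c d
      rw [← hS]
    simp only [hS'] at fi fj fk fl ⊢
    have kl : ∀ a b c d, S a b c d = S a b (!c) (!d) := fun a b c d => by
      linarith [fk a b c d, fl a b (!c) d]
    have ij : ∀ a b c d, S a b c d = S (!a) (!b) c d := fun a b c d => by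
      linarith [fi a b c d, fj (!a) b c d]
    refine ⟨⟨kl _ _ _ _, ij _ _ _ _, ?_⟩, kl _ _ _ _, ij _ _ _ _, ?_⟩
    · exact (kl _ _ _ _).trans (ij _ _ _ _)
    · exact (kl _ _ _ _).trans (ij _ _ _ _)

end Stmt14
end

section
/- Let 2n ≥ 4, let a ∈ ℂ, let i ≠ j be indices in {1, …, 2n}, and let g be a nonzero EO signature of arity 2n − 2 on the variables other than x_i, x_j. Define f : {0,1}^{2n} → ℂ by f(x) = a·[x = 0^{2n}] + conj(a)·[x = 1^{2n}] + [x_i ≠ x_j]·g(x restricted to the other variables). If f is irreducible, then f does not satisfy second order orthogonality. -/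
namespace Stmt16

/-- The Hamming weight of an assignment. -/
def hw {ι : Type*} [Fintype ι] (x : ι → Bool) : ℕ :=
  (Finset.univ.filter fun i => x i = true).card

/-- The signature obtained from `f` by pinning `x_i := a`, `x_j := b`. -/
def pin2 {n : ℕ} (f : (Fin n → Bool) → ℂ) (i j : Fin n) (a b : Bool)
    (y : {k : Fin n // k ≠ i ∧ k ≠ j} → Bool) : ℂ :=
  f fun k => if h : k = i then a else if h' : k = j then b else y ⟨k, h, h'⟩

/-- Second order orthogonality with constant `lam`. -/
def SecondOrth {n : ℕ} (f : (Fin n → Bool) → ℂ) (lam : ℝ) : Prop :=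
  lam ≠ 0 ∧
    ∀ i j : Fin n, i ≠ j →
      (∀ a b : Bool, (∑ y, Complex.normSq (pin2 f i j a b y)) = lam) ∧
      (∀ a b c d : Bool, (a, b) ≠ (c, d) →
        (∑ y, pin2 f i j a b y * (starRingEnd ℂ) (pin2 f i j c d y)) = 0)

/-- A signature is reducible if it is a (pointwise) product of a signature on a
nonempty proper subset `S` of its variables and a signature on the complement. -/
def Reducible {n : ℕ} (f : (Fin n → Bool) → ℂ) : Prop :=
  ∃ S : Finset (Fin n), S.Nonempty ∧ S ≠ Finset.univ ∧
    ∃ (g : ({k : Fin n // k ∈ S} → Bool) → ℂ)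
      (h : ({k : Fin n // k ∉ S} → Bool) → ℂ),
      ∀ x : Fin n → Bool, f x = g (fun k => x k.1) * h (fun k => x k.1)

/-- Let `2n ≥ 4`, `a ∈ ℂ`, let `i ≠ j` and let `g` be a nonzero EO signature of arity
`2n - 2` on the variables other than `x_i, x_j`.  If
`f = a·[x = 0⃗] + conj(a)·[x = 1⃗] + [x_i ≠ x_j]·g` is irreducible, then `f` does not
satisfy second order orthogonality. -/
theorem eo_plus_endpoints_not_secondOrth (n : ℕ) (hn : 2 ≤ n) (a : ℂ)
    (i j : Fin (2 * n)) (hij : i ≠ j)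
    (g : ({k : Fin (2 * n) // k ≠ i ∧ k ≠ j} → Bool) → ℂ)
    (hgEO : ∀ y, g y ≠ 0 → hw y = n - 1)
    (hgne : ∃ y, g y ≠ 0)
    (f : (Fin (2 * n) → Bool) → ℂ)
    (hf : ∀ x : Fin (2 * n) → Bool,
      f x = (if ∀ k, x k = false then a else 0) +
        (if ∀ k, x k = true then (starRingEnd ℂ) a else 0) +
        (if x i ≠ x j then 1 else 0) * g (fun k => x k.1))
    (hirr : ¬ Reducible f) :
    ¬ ∃ lam : ℝ, SecondOrth f lam := by
  rintro ⟨lam, hlam, h⟩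
  have key : ∀ b : Bool, ∀ y, pin2 f i j b (!b) y = g y := by
    intro b y
    have hji : j ≠ i := hij.symm
    have h0 : ∀ c : Bool, ¬ ∀ k, (fun k => if h : k = i then b else if h' : k = j then !b
        else y ⟨k, h, h'⟩) k = c := by
      intro c hc
      have h1 := hc i
      have h2 := hc j
      simp [hji] at h1 h2
      subst h1
      cases b <;> simp at h2
    have hg : (fun k : {k : Fin (2 * n) // k ≠ i ∧ k ≠ j} =>
        (fun k => if h : k = i then b else if h' : k = j then !b
        else y ⟨k, h, h'⟩) k.1) = y := by
      funext k
      simp [k.2.1, k.2.2]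
    unfold pin2
    rw [hf, if_neg (h0 false), if_neg (h0 true), hg]
    simp [hji]
  obtain ⟨h1, h2⟩ := h i j hij
  have e1 := h1 false true
  have e2 := h2 false true true false (by decide)
  have k1 : ∀ y, pin2 f i j false true y = g y := key false
  have k2 : ∀ y, pin2 f i j true false y = g y := key true
  simp only [k1, k2, Complex.mul_conj] at e1 e2
  apply hlam
  rw [← e1]
  exact_mod_cast e2

end Stmt16
end

section
/- Let f be a signature in D^⊗ of arity 2n ≥ 6, and let i, j, u, v, s, t be indices with {u, v} ≠ {s, t}, {i, j} ∩ {u, v} = ∅ and {i, j} ∩ {s, t} = ∅. If (≠_2)(x_i, x_j) divides ∂_{uv} f and (≠_2)(x_i, x_j) divides ∂_{st} f, then (≠_2)(x_i, x_j) divides f. -/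
namespace Stmt17

/-- The merge `∂_{ij} f = f^{01}_{ij} + f^{10}_{ij}` of `f` at `i, j` via the binary
disequality, a signature on the remaining variables. -/
def merge {ι : Type*} [DecidableEq ι] (f : (ι → Bool) → ℂ) (i j : ι)
    (y : {k : ι // k ≠ i ∧ k ≠ j} → Bool) : ℂ :=
  f (fun k => if h : k = i then false else if h' : k = j then true else y ⟨k, h, h'⟩) +
    f (fun k => if h : k = i then true else if h' : k = j then false else y ⟨k, h, h'⟩)

/-- `f ∈ D^⊗`: `f` is a nonzero real multiple of a tensor product of binary
disequalities, i.e. there are `λ ∈ ℝ \ {0}` and a partition of the variables into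
pairs (a fixed-point-free involution `p`) with `f x = λ` when `x` disagrees on every
pair and `f x = 0` otherwise. -/
def DTensor {ι : Type*} [Fintype ι] (f : (ι → Bool) → ℂ) : Prop :=
  ∃ lam : ℝ, lam ≠ 0 ∧ ∃ p : Equiv.Perm ι,
    (∀ k, p (p k) = k) ∧ (∀ k, p k ≠ k) ∧
    ∀ x : ι → Bool, f x = if ∀ k, x k ≠ x (p k) then (lam : ℂ) else 0

/-- `(≠₂)(x_i, x_j)` divides the signature `h`: `h` factors as the binary disequality
on `x_i, x_j` tensored with a signature on the remaining variables. -/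
def NeqDvd {ι : Type*} (i j : ι) (h : (ι → Bool) → ℂ) : Prop :=
  ∃ g : ({k : ι // k ≠ i ∧ k ≠ j} → Bool) → ℂ,
    ∀ x : ι → Bool, h x = (if x i ≠ x j then 1 else 0) * g (fun k => x k.1)

lemma flip_valid {ι : Type*} [DecidableEq ι] (p : Equiv.Perm ι)
    (hp : ∀ k, p (p k) = k) (x : ι → Bool) (hx : ∀ k, x k ≠ x (p k)) (w : ι) :
    ∀ k, (fun k => if k = w ∨ k = p w then !x k else x k) k ≠
      (fun k => if k = w ∨ k = p w then !x k else x k) (p k) := by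
  intro k
  have h1 : (p k = w ∨ p k = p w) ↔ (k = w ∨ k = p w) := by
    constructor
    · rintro (h | h)
      · right; rw [← h, hp]
      · left; exact p.injective h
    · rintro (h | h)
      · right; rw [h]
      · left; rw [h, hp]
  have := hx k
  simp only [h1]
  split_ifs
  · simpa using this
  · exact this

lemma exists_valid (m : ℕ) (p : Equiv.Perm (Fin m))
    (hp : ∀ k, p (p k) = k) (hp' : ∀ k, p k ≠ k) (i j u v : Fin m)
    (hij : i ≠ j) (hpij : p i ≠ j) (huv : u ≠ v)
    (hiu : i ≠ u) (hiv : i ≠ v) (hju : j ≠ u) (hjv : j ≠ v)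
    (h1 : ¬ (u = p i ∧ v = p j)) (h2 : ¬ (u = p j ∧ v = p i)) :
    ∃ x : Fin m → Bool, (∀ k, x k ≠ x (p k)) ∧ x i = x j ∧ x u ≠ x v := by
  obtain ⟨b, hb⟩ : ∃ x : Fin m → Bool, ∀ k, x k ≠ x (p k) := by
    refine ⟨fun k => decide (k < p k), fun k => ?_⟩
    have := hp' k
    simp only [hp, ne_eq, decide_eq_decide]
    intro h
    rcases lt_or_gt_of_ne this with h' | h'
    · exact absurd (h.2 h') (not_lt.2 h'.le)
    · exact absurd (h.1 h') (not_lt.2 h'.le)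
  obtain ⟨c, hc, hcij⟩ : ∃ x : Fin m → Bool, (∀ k, x k ≠ x (p k)) ∧ x i = x j := by
    by_cases h : b i = b j
    · exact ⟨b, hb, h⟩
    · refine ⟨_, flip_valid p hp b hb i, ?_⟩
      have e : ¬ (j = i ∨ j = p i) := by
        rintro (h | h)
        · exact hij h.symm
        · exact hpij h.symm
      simp only [e, if_false, true_or, if_true]
      revert h
      cases b i <;> cases b j <;> simp
  by_cases huvc : c u = c v
  swap
  · exact ⟨c, hc, hcij, huvc⟩
  have hpuv : v ≠ p u := by
    rintro rfl
    exact hc u huvc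
  have hpvu : u ≠ p v := by
    rintro rfl
    exact hpuv (hp v).symm
  by_cases hu : u = p i ∨ u = p j
  · have hvi : i ≠ p v := by
      intro h
      have hv : v = p i := by rw [h, hp]
      rcases hu with hu | hu
      · exact huv (hu.trans hv.symm)
      · exact h2 ⟨hu, hv⟩
    have hvj : j ≠ p v := by
      intro h
      have hv : v = p j := by rw [h, hp]
      rcases hu with hu | hu
      · exact h1 ⟨hu, hv⟩
      · exact huv (hu.trans hv.symm)
    refine ⟨_, flip_valid p hp c hc v, ?_, ?_⟩
    · simpa [hiv, hjv, hvi, hvj] using hcij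
    · simp [huv, hpvu, huvc]
  · have hui : i ≠ p u := by
      intro h
      exact hu (Or.inl (by rw [h, hp]))
    have huj : j ≠ p u := by
      intro h
      exact hu (Or.inr (by rw [h, hp]))
    refine ⟨_, flip_valid p hp c hc u, ?_, ?_⟩
    · simpa [hiu, hju, hui, huj] using hcij
    · simp [huv.symm, hpuv, huvc]

lemma merge_pair (m : ℕ) (p : Equiv.Perm (Fin m)) (f : (Fin m → Bool) → ℂ)
    (lam : ℝ) (hl : lam ≠ 0)
    (hf : ∀ x : Fin m → Bool, f x = if ∀ k, x k ≠ x (p k) then (lam : ℂ) else 0)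
    (hp : ∀ k, p (p k) = k) (hp' : ∀ k, p k ≠ k) (i j u v : Fin m)
    (hij : i ≠ j) (hpij : p i ≠ j) (huv : u ≠ v)
    (hiu : i ≠ u) (hiv : i ≠ v) (hju : j ≠ u) (hjv : j ≠ v)
    (hd : NeqDvd (⟨i, hiu, hiv⟩ : {k : Fin m // k ≠ u ∧ k ≠ v})
      ⟨j, hju, hjv⟩ (merge f u v)) :
    ({u, v} : Finset (Fin m)) = {p i, p j} := by
  by_contra hne
  obtain ⟨x, hx, hxij, hxuv⟩ := exists_valid m p hp hp' i j u v hij hpij huv hiu hiv hju hjv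
    (by rintro ⟨rfl, rfl⟩; exact hne rfl)
    (by rintro ⟨rfl, rfl⟩; exact hne (Finset.pair_comm _ _))
  obtain ⟨g, hg⟩ := hd
  have h := hg (fun k => x k.1)
  simp only [hxij, ne_eq, not_true_eq_false, if_false, zero_mul] at h
  have hfx : f x = lam := by rw [hf, if_pos hx]
  have hl' : (lam : ℂ) ≠ 0 := by exact_mod_cast hl
  have h01 : ∀ y, f y = lam ∨ f y = 0 := by
    intro y
    rw [hf]
    split_ifs <;> simp
  have hsum : ∀ a : ℂ, (a = lam ∨ a = 0) → (lam : ℂ) + a ≠ 0 := by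
    rintro a (rfl | rfl)
    · rw [← two_mul]; exact mul_ne_zero two_ne_zero hl'
    · simpa using hl'
  unfold merge at h
  cases hu : x u
  · have hv : x v = true := by
      rw [hu] at hxuv; cases hv : x v
      · exact absurd hv.symm hxuv
      · rfl
    have e : (fun k => if h : k = u then false else if h' : k = v then true else x k) = x := by
      funext k
      split_ifs with a b
      · rw [a, hu]
      · rw [b, hv]
      · rfl
    rw [e, hfx] at h
    exact hsum _ (h01 _) h
  · have hv : x v = false := by
      rw [hu] at hxuv; cases hv : x v
      · rfl
      · exact absurd hv.symm hxuv
    have e : (fun k => if h : k = u then true else if h' : k = v then false else x k) = x := by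
      funext k
      split_ifs with a b
      · rw [a, hu]
      · rw [b, hv]
      · rfl
    rw [e, hfx, add_comm] at h
    exact hsum _ (h01 _) h

lemma dvd_of_pair (m : ℕ) (p : Equiv.Perm (Fin m)) (f : (Fin m → Bool) → ℂ)
    (lam : ℝ)
    (hf : ∀ x : Fin m → Bool, f x = if ∀ k, x k ≠ x (p k) then (lam : ℂ) else 0)
    (hp : ∀ k, p (p k) = k) (i j : Fin m) (hpij : p i = j) :
    NeqDvd i j f := by
  classical
  have hpji : p j = i := by rw [← hpij, hp]
  have hpk : ∀ k, k ≠ i ∧ k ≠ j → p k ≠ i ∧ p k ≠ j := by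
    rintro k ⟨h1, h2⟩
    refine ⟨fun h => h2 ?_, fun h => h1 ?_⟩
    · rw [← hpij, ← h, hp]
    · rw [← hpji, ← h, hp]
  refine ⟨fun y => if ∀ k (hk : k ≠ i ∧ k ≠ j), y ⟨k, hk⟩ ≠ y ⟨p k, hpk k hk⟩ then
    (lam : ℂ) else 0, fun x => ?_⟩
  rw [hf]
  by_cases hx : x i = x j
  · rw [if_neg, if_neg (by simpa using hx), zero_mul]
    intro h
    exact h i (by rw [hpij, hx])
  · rw [if_pos hx, one_mul]
    congr 1
    apply propext
    constructor
    · intro h k _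
      exact h k
    · intro h k
      by_cases hki : k = i
      · rw [hki, hpij]; exact hx
      · by_cases hkj : k = j
        · rw [hkj, hpji]; exact Ne.symm hx
        · exact h k ⟨hki, hkj⟩

/-- Let `f ∈ D^⊗` have arity `2n ≥ 6` and let `{u,v} ≠ {s,t}` be pairs of indices,
both disjoint from `{i,j}`.  If `(≠₂)(x_i, x_j)` divides both `∂_{uv} f` and
`∂_{st} f`, then `(≠₂)(x_i, x_j)` divides `f`. -/
theorem dTensor_neqDvd_of_two_merges (n : ℕ) (hn : 3 ≤ n)
    (f : (Fin (2 * n) → Bool) → ℂ) (hf : DTensor f)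
    (i j u v s t : Fin (2 * n))
    (hij : i ≠ j) (huv : u ≠ v) (hst : s ≠ t)
    (hpairs : ({u, v} : Finset (Fin (2 * n))) ≠ {s, t})
    (hiu : i ≠ u) (hiv : i ≠ v) (hju : j ≠ u) (hjv : j ≠ v)
    (his : i ≠ s) (hit : i ≠ t) (hjs : j ≠ s) (hjt : j ≠ t)
    (hdvd1 : NeqDvd (⟨i, hiu, hiv⟩ : {k : Fin (2 * n) // k ≠ u ∧ k ≠ v})
      ⟨j, hju, hjv⟩ (merge f u v))
    (hdvd2 : NeqDvd (⟨i, his, hit⟩ : {k : Fin (2 * n) // k ≠ s ∧ k ≠ t})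
      ⟨j, hjs, hjt⟩ (merge f s t)) :
    NeqDvd i j f := by
  obtain ⟨lam, hl, p, hp, hp', hf0⟩ := hf
  have hf : ∀ x : Fin (2 * n) → Bool,
      f x = if ∀ k, x k ≠ x (p k) then (lam : ℂ) else 0 := by
    intro x
    rw [hf0 x]
    split_ifs <;> rfl
  by_cases hpij : p i = j
  · exact dvd_of_pair _ p f lam hf hp i j hpij
  · exfalso
    apply hpairs
    rw [merge_pair _ p f lam hl hf hp hp' i j u v hij hpij huv hiu hiv hju hjv hdvd1,
      merge_pair _ p f lam hl hf hp hp' i j s t hij hpij hst his hit hjs hjt hdvd2]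

end Stmt17
end

section
/- Let f be an EO signature of arity 2n ≥ 10 satisfying ARS. If the merge ∂_{ij} f lies in D^⊗ for every pair of distinct indices {i, j}, then f itself lies in D^⊗. -/
namespace Stmt18

/-- The Hamming weight of an assignment. -/
def hw {ι : Type*} [Fintype ι] (x : ι → Bool) : ℕ :=
  (Finset.univ.filter fun i => x i = true).card

/-- The merge `∂_{ij} f = f^{01}_{ij} + f^{10}_{ij}` of `f` at `i, j` via the binary
disequality, a signature on the remaining variables. -/
def merge {ι : Type*} [DecidableEq ι] (f : (ι → Bool) → ℂ) (i j : ι)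
    (y : {k : ι // k ≠ i ∧ k ≠ j} → Bool) : ℂ :=
  f (fun k => if h : k = i then false else if h' : k = j then true else y ⟨k, h, h'⟩) +
    f (fun k => if h : k = i then true else if h' : k = j then false else y ⟨k, h, h'⟩)

/-- Arrow reversal symmetry: `conj (f α) = f ᾱ`. -/
def ARS {ι : Type*} (f : (ι → Bool) → ℂ) : Prop :=
  ∀ x : ι → Bool, (starRingEnd ℂ) (f x) = f fun i => !(x i)

/-- `f ∈ D^⊗`: `f` is a nonzero real multiple of a tensor product of binary
disequalities, i.e. there are `λ ∈ ℝ \ {0}` and a partition of the variables into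
pairs (a fixed-point-free involution `p`) with `f x = λ` when `x` disagrees on every
pair and `f x = 0` otherwise. -/
def DTensor {ι : Type*} [Fintype ι] (f : (ι → Bool) → ℂ) : Prop :=
  ∃ lam : ℝ, lam ≠ 0 ∧ ∃ p : Equiv.Perm ι,
    (∀ k, p (p k) = k) ∧ (∀ k, p k ≠ k) ∧
    ∀ x : ι → Bool, f x = if ∀ k, x k ≠ x (p k) then (lam : ℂ) else 0

section helpers
variable {ι : Type*} [Fintype ι] [DecidableEq ι]

/-- The merge, viewed as a signature on all variables. -/
def dd (f : (ι → Bool) → ℂ) (i j : ι) (x : ι → Bool) : ℂ :=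
  f (Function.update (Function.update x i false) j true) +
    f (Function.update (Function.update x i true) j false)

/-- A fixed-point-free involution. -/
def IsM (p : ι → ι) : Prop := (∀ k, p (p k) = k) ∧ ∀ k, p k ≠ k

/-- Indicator of disagreement on all pairs outside `S`. -/
def FF (S : Finset ι) (p : ι → ι) (x : ι → Bool) : ℂ :=
  if ∀ k, k ∉ S → x k ≠ x (p k) then 1 else 0

/-- The merged matching. -/
def mg (p : ι → ι) (k l : ι) : ι → ι :=
  fun m => Equiv.swap l (p k) (p (Equiv.swap l (p k) m))

omit [Fintype ι] in
lemma mg_isM {p : ι → ι} (hp : IsM p) (k l : ι) : IsM (mg p k l) := by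
  refine ⟨fun m => ?_, fun m h => ?_⟩
  · simp [mg, hp.1]
  · have h2 := congrArg (Equiv.swap l (p k)) h
    simp only [mg, Equiv.swap_apply_self] at h2
    exact hp.2 _ h2

omit [Fintype ι] in
lemma mg_left {p : ι → ι} (hp : IsM p) {k l : ι} (hkl : k ≠ l) : mg p k l k = l := by
  have := hp.2 k
  have h : Equiv.swap l (p k) k = k := Equiv.swap_apply_of_ne_of_ne hkl (Ne.symm this)
  simp [mg, h]

omit [Fintype ι] in
lemma mg_off {p : ι → ι} (hp : IsM p) {k l m : ι} (h1 : m ≠ k) (h2 : m ≠ l)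
    (h3 : m ≠ p k) (h4 : m ≠ p l) : mg p k l m = p m := by
  have h : Equiv.swap l (p k) m = m := Equiv.swap_apply_of_ne_of_ne h2 h3
  have hp1 := hp.1
  simp only [mg, h]
  apply Equiv.swap_apply_of_ne_of_ne
  · intro h; apply h4; rw [← h, hp.1]
  · intro h; apply h1; rw [← hp.1 m, h, hp.1]

omit [Fintype ι] in
lemma mg_partner {p : ι → ι} (hp : IsM p) {k l : ι} (hkl : k ≠ l) (h : p k ≠ l) :
    mg p k l (p k) = p l := by
  have hp1 := hp.1 k
  have hp2 := hp.1 l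
  have hp3 := hp.2 l
  simp only [mg, Equiv.swap_apply_right]
  apply Equiv.swap_apply_of_ne_of_ne hp3
  intro h; apply hkl; rw [← hp1, ← h, hp2]

omit [Fintype ι] in
lemma mg_self {p : ι → ι} {k l : ι} (h : p k = l) : mg p k l = p := by
  subst h
  funext m
  simp [mg]

lemma merge_FF {p : ι → ι} (hp : IsM p) {S : Finset ι} (hS : ∀ k ∈ S, p k ∈ S)
    {k l : ι} (hk : k ∉ S) (hl : l ∉ S) (hkl : k ≠ l) (x : ι → Bool) :
    dd (FF S p) k l x
      = (if p k = l then 2 else 1) * FF (insert k (insert l S)) (mg p k l) x := by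
  have hS' : ∀ k, k ∉ S → p k ∉ S := fun k hk h => hk (by simpa [hp.1] using hS _ h)
  by_cases hpk : p k = l
  · have hpl : p l = k := by rw [← hpk, hp.1]
    have key : ∀ b : Bool, (∀ m, m ∉ S →
        (Function.update (Function.update x k b) l (!b)) m ≠
        (Function.update (Function.update x k b) l (!b)) (p m)) ↔
        ∀ m, m ∉ insert k (insert l S) → x m ≠ x (p m) := by
      intro b
      constructor
      · intro h m hm
        simp only [Finset.mem_insert, not_or] at hm
        have h1 : p m ≠ k := by intro h; apply hm.2.1; rw [← hpk, ← h, hp.1]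
        have h2 : p m ≠ l := by intro h; apply hm.1; rw [← hpl, ← h, hp.1]
        have := h m hm.2.2
        simpa [Function.update_apply, hm, h1, h2] using this
      · intro h m hm
        by_cases h1 : m = k
        · subst h1; simp [Function.update_apply, hpk, hkl]
        by_cases h2 : m = l
        · subst h2; simp [Function.update_apply, hpl, hkl]
        have h3 : p m ≠ k := by intro h; apply h2; rw [← hpk, ← h, hp.1]
        have h4 : p m ≠ l := by intro h; apply h1; rw [← hpl, ← h, hp.1]
        have := h m (by simp [h1, h2, hm])
        simpa [Function.update_apply, h1, h2, h3, h4] using this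
    have k1 := key false
    have k2 := key true
    simp only [Bool.not_false, Bool.not_true] at k1 k2
    simp only [dd, FF, k1, k2, mg_self hpk, hpk, if_true]
    ring
  · have hpl : p l ≠ k := by intro h; apply hpk; rw [← h, hp.1]
    have hab : p k ≠ p l := by intro h; apply hkl; rw [← hp.1 k, h, hp.1]
    have hkk := hp.2 k
    have hll := hp.2 l
    have key : ∀ b : Bool, (∀ m, m ∉ S →
        (Function.update (Function.update x k b) l (!b)) m ≠
        (Function.update (Function.update x k b) l (!b)) (p m)) ↔
        (x (p k) = !b) ∧ (x (p l) = b) ∧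
        ∀ m, m ∉ insert k (insert l S) → m ≠ p k → m ≠ p l → x m ≠ x (p m) := by
      intro b
      constructor
      · intro h
        refine ⟨?_, ?_, ?_⟩
        · have := h k hk
          simp [Function.update_apply, hkl, hpk, hkk] at this
          revert this; cases b <;> cases x (p k) <;> simp
        · have := h l hl
          simp [Function.update_apply, hpl, hll] at this
          revert this; cases b <;> cases x (p l) <;> simp
        intro m hm h5 h6
        simp only [Finset.mem_insert, not_or] at hm
        have h1 : p m ≠ k := by intro h; apply h5; rw [← h, hp.1]
        have h2 : p m ≠ l := by intro h; apply h6; rw [← h, hp.1]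
        have := h m hm.2.2
        simpa [Function.update_apply, hm, h1, h2] using this
      · rintro ⟨ha, hb, h⟩ m hm
        by_cases h1 : m = k
        · subst h1; simp [Function.update_apply, hpk, hkl, hkk, ha]
        by_cases h2 : m = l
        · subst h2; simp [Function.update_apply, hpl, hll, hb]
        by_cases h5 : m = p k
        · subst h5; simp [Function.update_apply, hpk, hkl, hkk, ha, hp.1]
        by_cases h6 : m = p l
        · subst h6; simp [Function.update_apply, hpl, hll, hb, hp.1]
        have h3 : p m ≠ k := by intro h; apply h5; rw [← h, hp.1]
        have h4 : p m ≠ l := by intro h; apply h6; rw [← h, hp.1]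
        have := h m (by simp [h1, h2, hm]) h5 h6
        simpa [Function.update_apply, h1, h2, h3, h4] using this
    have k3 : (∀ m, m ∉ insert k (insert l S) → x m ≠ x (mg p k l m)) ↔
        x (p k) ≠ x (p l) ∧
        ∀ m, m ∉ insert k (insert l S) → m ≠ p k → m ≠ p l → x m ≠ x (p m) := by
      have hq := mg_partner hp hkl hpk
      have hq' : mg p k l (p l) = p k := by rw [← hq, (mg_isM hp k l).1]
      constructor
      · intro h
        refine ⟨?_, ?_⟩
        · have := h (p k) (by simp [hkk, hpk, hS' k hk])
          rwa [hq] at this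
        · intro m hm h5 h6
          have := h m hm
          simp only [Finset.mem_insert, not_or] at hm
          rwa [mg_off hp hm.1 hm.2.1 h5 h6] at this
      · rintro ⟨h0, h⟩ m hm
        by_cases h5 : m = p k
        · rw [h5, hq]; exact h0
        by_cases h6 : m = p l
        · rw [h6, hq']; exact h0.symm
        have := h m hm h5 h6
        simp only [Finset.mem_insert, not_or] at hm
        rwa [mg_off hp hm.1 hm.2.1 h5 h6]
    have k1 := key false
    have k2 := key true
    simp only [Bool.not_false, Bool.not_true] at k1 k2
    by_cases hR : ∀ m, m ∉ insert k (insert l S) → m ≠ p k → m ≠ p l → x m ≠ x (p m)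
    · rw [eq_true hR, and_true] at k1 k2 k3
      simp only [dd, FF, k1, k2, k3, hpk, if_false]
      cases x (p k) <;> cases x (p l) <;> simp
    · rw [eq_false hR, and_false] at k1 k2 k3
      simp only [dd, FF, k1, k2, k3, hpk, if_false]
      simp

lemma exists_orient {p : ι → ι} (hp : IsM p) (a b : ι) (hab : b ≠ p a) :
    ∃ x : ι → Bool, (∀ k, x k ≠ x (p k)) ∧ x a = x b := by
  classical
  let e := Fintype.equivFin ι
  let y : ι → Bool := fun k => decide (e k < e (p k))
  have hy : ∀ k, y k ≠ y (p k) := by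
    intro k
    have : e k ≠ e (p k) := fun h => hp.2 k (e.injective h).symm
    simp only [y, hp.1, ne_eq, decide_eq_decide]
    omega
  by_cases h : y a = y b
  · exact ⟨y, hy, h⟩
  · have hne : a ≠ b := by rintro rfl; exact h rfl
    refine ⟨fun k => if k = b ∨ k = p b then !(y k) else y k, fun k => ?_, ?_⟩
    · have e1 : (p k = b ∨ p k = p b) ↔ (k = b ∨ k = p b) := by
        constructor
        · rintro (h | h)
          · right; rw [← h, hp.1]
          · left; rw [← hp.1 k, h, hp.1]
        · rintro (h | h)
          · right; rw [h]
          · left; rw [h, hp.1]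
      have := hy k
      simp only [e1]
      split_ifs <;> simpa using this
    · have h1 : a ≠ p b := by intro h'; apply hab; rw [h', hp.1]
      simp only [hne, h1, or_self, if_false, true_or, if_true]
      revert h; cases y a <;> cases y b <;> simp

lemma FF_unique {p q : ι → ι} (hp : IsM p) (hq : IsM q) {S : Finset ι}
    {a b : ℝ} (ha : a ≠ 0)
    (h : ∀ x, (a : ℂ) * FF S p x = b * FF S q x) :
    a = b ∧ ∀ k, k ∉ S → q k = p k := by
  have h2 : ∀ x : ι → Bool, (∀ k, x k ≠ x (p k)) →
      (∀ k, k ∉ S → x k ≠ x (q k)) ∧ a = b := by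
    intro x hx
    have h1 := h x
    have e1 : FF S p x = 1 := by simp only [FF]; rw [if_pos]; exact fun k _ => hx k
    rw [e1] at h1
    by_cases hc : ∀ k, k ∉ S → x k ≠ x (q k)
    · refine ⟨hc, ?_⟩
      have e2 : FF S q x = 1 := by simp only [FF]; rw [if_pos hc]
      rw [e2] at h1
      simpa using h1
    · have e2 : FF S q x = 0 := by simp only [FF]; rw [if_neg hc]
      rw [e2] at h1
      simp [ha] at h1
  refine ⟨?_, fun k hk => ?_⟩
  · by_cases hE : Nonempty ι
    · obtain ⟨i⟩ := hE
      obtain ⟨x, hx, -⟩ := exists_orient hp i i (hp.2 i).symm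
      exact (h2 x hx).2
    · exact (h2 (fun _ => true) (fun k => (hE ⟨k⟩).elim)).2
  · by_contra hne
    obtain ⟨x, hx, hxx⟩ := exists_orient hp k (q k) hne
    exact (h2 x hx).1 k hk hxx

omit [Fintype ι] in
lemma dd_comm (f : (ι → Bool) → ℂ) {i j k l : ι} (h1 : i ≠ k) (h2 : i ≠ l) (h3 : j ≠ k)
    (h4 : j ≠ l) (x : ι → Bool) : dd (dd f i j) k l x = dd (dd f k l) i j x := by
  have key : ∀ a b c d : Bool,
      Function.update (Function.update (Function.update (Function.update x k a) l b) i c) j d =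
      Function.update (Function.update (Function.update (Function.update x i c) j d) k a) l b := by
    intro a b c d
    funext m
    simp only [Function.update_apply]
    split_ifs <;> simp_all
  simp only [dd, key]
  ring

omit [Fintype ι] in
lemma dd_symm (f : (ι → Bool) → ℂ) {i j : ι} (h : i ≠ j) (x : ι → Bool) :
    dd f i j x = dd f j i x := by
  simp only [dd]
  rw [Function.update_comm h, Function.update_comm h, add_comm]

omit [Fintype ι] in
lemma dd_smul (a : ℂ) (f : (ι → Bool) → ℂ) (i j : ι) (x : ι → Bool) :
    dd (fun y => a * f y) i j x = a * dd f i j x := by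
  simp only [dd]; ring

lemma eq_of_dd {f g : (ι → Bool) → ℂ} (hcard : 3 ≤ Fintype.card ι)
    (h : ∀ i j, i ≠ j → ∀ x, dd f i j x = dd g i j x)
    (hc : ∀ x : ι → Bool, (∀ i j, x i = x j) → f x = g x) (x : ι → Bool) : f x = g x := by
  by_cases hx : ∀ i j, x i = x j
  · exact hc x hx
  push Not at hx
  obtain ⟨i, j, hij⟩ := hx
  have hij' : i ≠ j := by rintro rfl; exact hij rfl
  obtain ⟨k, hk⟩ : ∃ k, k ∉ ({i, j} : Finset ι) := by
    by_contra hcon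
    push Not at hcon
    have := Finset.card_le_card (fun k _ => hcon k : (Finset.univ : Finset ι) ⊆ {i, j})
    have h2 := Finset.card_le_two (a := i) (b := j)
    rw [Finset.card_univ] at this
    omega
  simp only [Finset.mem_insert, Finset.mem_singleton, not_or] at hk
  obtain ⟨a, b, c, hab, hac, hbc, h1, h2⟩ : ∃ a b c, a ≠ b ∧ a ≠ c ∧ b ≠ c ∧ x b = !(x a) ∧
      x c = x a := by
    by_cases hki : x k = x i
    · exact ⟨i, j, k, hij', Ne.symm hk.1, Ne.symm hk.2,
        by revert hij; cases x i <;> cases x j <;> simp, hki⟩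
    · exact ⟨j, i, k, hij'.symm, Ne.symm hk.2, Ne.symm hk.1,
        by revert hij; cases x i <;> cases x j <;> simp,
        by revert hij hki; cases x i <;> cases x j <;> cases x k <;> simp⟩
  -- the three assignments in the triangle
  have key : ∀ F : (ι → Bool) → ℂ,
      2 * F x = dd F a b x + dd F b c x -
        dd F a c (Function.update x b (x a)) := by
    intro F
    have s : ∀ t : Bool, x a = t → 2 * F x = dd F a b x + dd F b c x -
        dd F a c (Function.update x b (x a)) := by
      intro t ht
      have e1 : Function.update (Function.update x a t) b (!t) = x := by
        funext m; simp only [Function.update_apply]; split_ifs <;> simp_all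
      have e2 : Function.update (Function.update x b (!t)) c t = x := by
        funext m; simp only [Function.update_apply]; split_ifs <;> simp_all
      have e3 : Function.update (Function.update (Function.update x b t) a (!t)) c t =
          Function.update (Function.update x a (!t)) b t := by
        funext m; simp only [Function.update_apply]; split_ifs <;> simp_all
      have e4 : Function.update (Function.update (Function.update x b t) a t) c (!t) =
          Function.update (Function.update x b t) c (!t) := by
        funext m; simp only [Function.update_apply]; split_ifs <;> simp_all
      simp only [dd, ht]
      cases t <;> simp only [Bool.not_false, Bool.not_true] at e1 e2 e3 e4 <;>
        rw [e1, e2, e3, e4] <;> ring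
    exact s _ rfl
  have kf := key f
  have kg := key g
  rw [h a b hab, h b c hbc, h a c hac, ← kg] at kf
  exact mul_left_cancel₀ two_ne_zero kf

lemma extend_merge (f : (ι → Bool) → ℂ) {i j : ι} (hij : i ≠ j) (h : DTensor (merge f i j)) :
    ∃ lam : ℝ, ∃ p : ι → ι, lam ≠ 0 ∧ IsM p ∧ p i = j ∧
      ∀ x, dd f i j x = lam * FF {i, j} p x := by
  obtain ⟨lam, hlam, p, hp1, hp2, hp⟩ := h
  let P : ι → ι := fun k => if h : k = i then j else if h' : k = j then i else p ⟨k, h, h'⟩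
  have hP : ∀ k (h : k ≠ i) (h' : k ≠ j), P k = p ⟨k, h, h'⟩ := by
    intro k h h'; simp [P, h, h']
  have hPi : P i = j := by simp [P]
  have hPj : P j = i := by simp [P, hij.symm]
  refine ⟨lam, P, hlam, ⟨fun k => ?_, fun k => ?_⟩, hPi, fun x => ?_⟩
  · by_cases h : k = i
    · rw [h, hPi, hPj]
    by_cases h' : k = j
    · rw [h', hPj, hPi]
    have := (p ⟨k, h, h'⟩).2
    rw [hP k h h', hP _ this.1 this.2]
    simp [hp1]
  · by_cases h : k = i
    · rw [h, hPi]; exact hij.symm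
    by_cases h' : k = j
    · rw [h', hPj]; exact hij
    rw [hP k h h']
    intro hh
    exact hp2 ⟨k, h, h'⟩ (Subtype.ext hh)
  · have e : dd f i j x = merge f i j (fun k => x k) := by
      simp only [dd, merge]
      congr 2 <;>
      · funext m
        simp only [Function.update_apply]
        split_ifs <;> simp_all
    rw [e, hp]
    have : (∀ k : {k : ι // k ≠ i ∧ k ≠ j}, x k ≠ x (p k)) ↔
        ∀ k, k ∉ ({i, j} : Finset ι) → x k ≠ x (P k) := by
      constructor
      · intro h k hk
        simp only [Finset.mem_insert, Finset.mem_singleton, not_or] at hk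
        rw [hP k hk.1 hk.2]
        exact h ⟨k, hk⟩
      · rintro h ⟨k, hk⟩
        have := h k (by simp [hk.1, hk.2])
        rwa [hP k hk.1 hk.2] at this
    simp only [FF, this]
    split_ifs <;> simp

lemma exists_off (S : Finset ι) (m : ℕ) (h : S.card ≤ m) (h' : m < Fintype.card ι) :
    ∃ e, e ∉ S := by
  by_contra hcon
  push Not at hcon
  have := Finset.card_le_card (fun k _ => hcon k : (Finset.univ : Finset ι) ⊆ S)
  rw [Finset.card_univ] at this
  omega

/-- Compatibility of two merges at disjoint pairs. -/
lemma compat {f : (ι → Bool) → ℂ} {i j k l : ι} (h1 : i ≠ k) (h2 : i ≠ l) (h3 : j ≠ k)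
    (h4 : j ≠ l) (hij : i ≠ j) (hkl : k ≠ l) {a b : ℝ} {p q : ι → ι} (ha : a ≠ 0)
    (hp : IsM p) (hq : IsM q) (hpi : p i = j) (hqk : q k = l)
    (hpf : ∀ x, dd f i j x = a * FF {i, j} p x) (hqf : ∀ x, dd f k l x = b * FF {k, l} q x) :
    a * (if p k = l then 2 else 1) = b * (if q i = j then 2 else 1) ∧
    ∀ m, m ≠ i → m ≠ j → m ≠ k → m ≠ l → mg q i j m = mg p k l m := by
  have hpj : p j = i := by rw [← hpi, hp.1]
  have hql : q l = k := by rw [← hqk, hq.1]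
  have e1 : dd f i j = fun x => a * FF {i, j} p x := funext hpf
  have e2 : dd f k l = fun x => b * FF {k, l} q x := funext hqf
  have hc := dd_comm f h1 h2 h3 h4
  have hset : insert i (insert j ({k, l} : Finset ι)) = insert k (insert l {i, j}) := by
    ext m; simp only [Finset.mem_insert, Finset.mem_singleton]; tauto
  have hx : ∀ x, ((a * (if p k = l then 2 else 1) : ℝ) : ℂ) *
      FF (insert k (insert l {i, j})) (mg p k l) x =
      ((b * (if q i = j then 2 else 1) : ℝ) : ℂ) *
      FF (insert k (insert l {i, j})) (mg q i j) x := by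
    intro x
    have := hc x
    rw [e1, e2, dd_smul, dd_smul,
      merge_FF hp (by simp [hpi, hpj]) (by simp [h1.symm, h3.symm]) (by simp [h2.symm, h4.symm])
        hkl,
      merge_FF hq (by simp [hqk, hql]) (by simp [h1, h2]) (by simp [h3, h4]) hij, hset] at this
    push_cast
    rw [mul_assoc, mul_assoc]
    convert this using 3 <;> split_ifs <;> simp
  obtain ⟨r1, r2⟩ := FF_unique (mg_isM hp k l) (mg_isM hq i j)
    (by split_ifs <;> simp [ha]) hx
  refine ⟨r1, fun m g1 g2 g3 g4 => r2 m ?_⟩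
  simp [g1, g2, g3, g4]

lemma main_aux (hcard : 10 ≤ Fintype.card ι) (f : (ι → Bool) → ℂ)
    (hc : ∀ x : ι → Bool, (∀ i j, x i = x j) → f x = 0)
    (hm : ∀ i j, i ≠ j → DTensor (merge f i j)) : DTensor f := by
  have hm' : ∀ e : {e : ι × ι // e.1 ≠ e.2}, ∃ lam : ℝ, ∃ p : ι → ι, lam ≠ 0 ∧ IsM p ∧
      p e.1.1 = e.1.2 ∧ ∀ x, dd f e.1.1 e.1.2 x = lam * FF {e.1.1, e.1.2} p x :=
    fun e => extend_merge f e.2 (hm _ _ e.2)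
  choose lam p hlam hpM hpe hpf using hm'
  have hne : Nonempty {e : ι × ι // e.1 ≠ e.2} := by
    obtain ⟨a, b, hab⟩ := Fintype.exists_pair_of_one_lt_card (α := ι) (by omega)
    exact ⟨⟨(a, b), hab⟩⟩
  obtain ⟨⟨⟨i, j⟩, hij⟩, hmax⟩ := Finite.exists_max (fun e => |lam e|)
  dsimp only at hij
  obtain ⟨M, hMdef⟩ : ∃ M, M = p ⟨(i, j), hij⟩ := ⟨_, rfl⟩
  obtain ⟨c0, hc0⟩ : ∃ c, c = lam ⟨(i, j), hij⟩ := ⟨_, rfl⟩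
  have hM : IsM M := hMdef ▸ hpM _
  have hMi : M i = j := hMdef ▸ hpe ⟨(i, j), hij⟩
  have hMj : M j = i := by rw [← hMi, hM.1]
  have hc00 : c0 ≠ 0 := hc0 ▸ hlam _
  have hMf : ∀ x, dd f i j x = c0 * FF {i, j} M x := by
    rw [hMdef, hc0]; exact hpf ⟨(i, j), hij⟩
  rw [← hc0] at hmax
  -- merges at pairs of `M`
  have claim1 : ∀ a x, dd f a (M a) x = c0 * FF {a, M a} M x := by
    intro a
    by_cases hai : a = i
    · subst hai; rw [hMi]; exact hMf
    by_cases haj : a = j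
    · subst haj; rw [hMj]; intro x
      rw [← dd_symm f hij, hMf, Finset.pair_comm]
    have hab : a ≠ M a := (hM.2 a).symm
    have hbi : M a ≠ i := by intro h; apply haj; rw [← hMi, ← h, hM.1]
    have hbj : M a ≠ j := by intro h; apply hai; rw [← hMj, ← h, hM.1]
    let e : {e : ι × ι // e.1 ≠ e.2} := ⟨(a, M a), hab⟩
    obtain ⟨r1, r2⟩ := compat (Ne.symm hai) hbi.symm (Ne.symm haj) hbj.symm hij hab hc00 hM
      (hpM e) hMi (hpe e) hMf (hpf e)
    rw [if_pos rfl] at r1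
    have hpos : 0 < |c0| := abs_pos.mpr hc00
    have hpi : p e i = j := by
      by_contra hcon
      rw [if_neg hcon, mul_one] at r1
      have := hmax e
      simp only [← r1, abs_mul, abs_two] at this
      linarith
    rw [if_pos hpi] at r1
    have r1' : c0 = lam e := by linarith
    have hpM' : p e = M := by
      have hpj : p e j = i := by rw [← hpi, (hpM e).1]
      have hpa : p e a = M a := hpe e
      have hpb : p e (M a) = a := by rw [← hpa, (hpM e).1]
      funext m
      by_cases g1 : m = i
      · rw [g1, hpi, hMi]
      by_cases g2 : m = j
      · rw [g2, hpj, hMj]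
      by_cases g3 : m = a
      · rw [g3, hpa]
      by_cases g4 : m = M a
      · rw [g4, hpb, hM.1]
      have := r2 m g1 g2 g3 g4
      rwa [mg_self hpi, mg_self rfl] at this
    have := hpf e
    rw [hpM', ← r1'] at this
    exact this
  -- other merges
  have claim2 : ∀ a b, a ≠ b → M a ≠ b → ∀ x,
      dd f a b x = ((c0 / 2 : ℝ) : ℂ) * FF {a, b} (mg M a b) x := by
    intro a b hab hMab
    let e : {e : ι × ι // e.1 ≠ e.2} := ⟨(a, b), hab⟩
    have hq := hpM e
    have hqa : p e a = b := hpe e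
    have hqf : ∀ x, dd f a b x = lam e * FF {a, b} (p e) x := hpf e
    have hle := hlam e
    generalize p e = q at hq hqa hqf
    generalize lam e = μ at hqf hle
    have hqb : q b = a := by rw [← hqa, hq.1]
    have step : ∀ c, c ∉ ({a, b, M a, M b} : Finset ι) →
        (c0 = μ * (if q c = M c then 2 else 1)) ∧
        ∀ m, m ≠ a → m ≠ b → m ≠ c → m ≠ M c → mg q c (M c) m = mg M a b m := by
      intro c hcT
      simp only [Finset.mem_insert, Finset.mem_singleton, not_or] at hcT
      obtain ⟨t1, t2, t3, t4⟩ := hcT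
      have t5 : M c ≠ a := by intro h; apply t3; rw [← h, hM.1]
      have t6 : M c ≠ b := by intro h; apply t4; rw [← h, hM.1]
      obtain ⟨r1, r2⟩ := compat t1 t2 t5 t6 (hM.2 c).symm hab hc00 hM hq rfl hqa
        (claim1 c) hqf
      rw [if_neg hMab, mul_one] at r1
      exact ⟨r1, fun m g1 g2 g3 g4 => r2 m g3 g4 g1 g2⟩
    have good : ∃ c, c ∉ ({a, b, M a, M b} : Finset ι) ∧ q c = M c := by
      obtain ⟨c, hcT⟩ := exists_off ({a, b, M a, M b} : Finset ι) 4 Finset.card_le_four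
        (by omega)
      obtain ⟨e, he⟩ := exists_off (({a, b, M a, M b} : Finset ι) ∪ {c, M c, q c, q (M c)}) 8
        (by
          refine (Finset.card_union_le _ _).trans ?_
          have h1 := Finset.card_le_four (a := a) (b := b) (c := M a) (d := M b)
          have h2 := Finset.card_le_four (a := c) (b := M c) (c := q c) (d := q (M c))
          omega) (by omega)
      rw [Finset.mem_union, not_or] at he
      refine ⟨e, he.1, ?_⟩
      have he1 := he.1
      have he2 := he.2
      simp only [Finset.mem_insert, Finset.mem_singleton, not_or] at he1 he2
      have := (step c hcT).2 e he1.1 he1.2.1 he2.1 he2.2.1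
      rwa [mg_off hq he2.1 he2.2.1 he2.2.2.1 he2.2.2.2,
        mg_off hM he1.1 he1.2.1 he1.2.2.1 he1.2.2.2] at this
    obtain ⟨c, hcT, hqc⟩ := good
    obtain ⟨r1, r2⟩ := step c hcT
    rw [if_pos hqc] at r1
    rw [mg_self hqc] at r2
    have hμ : μ = c0 / 2 := by linarith
    have hqM : q = mg M a b := by
      simp only [Finset.mem_insert, Finset.mem_singleton, not_or] at hcT
      obtain ⟨t1, t2, t3, t4⟩ := hcT
      have t7 : mg M a b c = M c := mg_off hM t1 t2 t3 t4
      have hG := mg_isM hM a b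
      have t8 : mg M a b a = b := mg_left hM hab
      funext m
      by_cases g1 : m = a
      · rw [g1, hqa, t8]
      by_cases g2 : m = b
      · have t9 := hG.1 a
        rw [t8] at t9
        rw [g2, hqb, t9]
      by_cases g3 : m = c
      · rw [g3, hqc, t7]
      by_cases g4 : m = M c
      · rw [g4]
        have : q (M c) = c := by rw [← hqc, hq.1]
        rw [this, ← t7, hG.1]
      exact r2 m g1 g2 g3 g4
    rw [← hqM, ← hμ]
    exact hqf
  have hfg : ∀ x, f x = ((c0 / 2 : ℝ) : ℂ) * FF ∅ M x := by
    refine eq_of_dd (by omega) ?_ ?_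
    · intro a b hab x
      rw [dd_smul, merge_FF hM (by simp) (by simp) (by simp) hab]
      by_cases hMab : M a = b
      · rw [if_pos hMab, mg_self hMab, ← hMab, claim1]
        push_cast
        simp only [insert_empty_eq]
        ring
      · rw [if_neg hMab, claim2 a b hab hMab, one_mul]
        simp only [insert_empty_eq]
    · intro x hx
      rw [hc x hx]
      simp only [FF]
      rw [if_neg, mul_zero]
      intro h
      exact h i (by simp) (hx _ _)
  refine ⟨c0 / 2, by simpa using hc00, Function.Involutive.toPerm M hM.1, hM.1, hM.2, fun x => ?_⟩
  rw [hfg]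
  have e : ∀ k, Function.Involutive.toPerm M hM.1 k = M k := fun _ => rfl
  simp only [FF, Finset.notMem_empty, not_false_eq_true, true_imp_iff, e]
  split_ifs <;> simp

end helpers

/-- Let `f` be an EO signature of arity `2n ≥ 10` satisfying ARS.  If all merges
`∂_{ij} f` lie in `D^⊗`, then `f` lies in `D^⊗`. -/
theorem eo_dTensor_of_merges (n : ℕ) (hn : 5 ≤ n)
    (f : (Fin (2 * n) → Bool) → ℂ)
    (hEO : ∀ x : Fin (2 * n) → Bool, f x ≠ 0 → hw x = n)
    (hars : ARS f)
    (hmerge : ∀ i j : Fin (2 * n), i ≠ j → DTensor (merge f i j)) :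
    DTensor f := by
  refine main_aux (by simpa using by omega) f (fun x hx => ?_) hmerge
  by_contra hne
  have h := hEO x hne
  have h0 : (0 : ℕ) < 2 * n := by omega
  cases hb : x ⟨0, h0⟩ with
  | true =>
    have : hw x = 2 * n := by
      simp [hw, fun i => (hx i ⟨0, h0⟩).trans hb]
    omega
  | false =>
    have : hw x = 0 := by
      simp [hw, fun i => (hx i ⟨0, h0⟩).trans hb]
    omega

end Stmt18
end

section
/- The 8-ary signature f_8 satisfies the strong Bell property: for every pair of distinct indices {i, j} ⊆ {1, …, 8} and every Bell binary signature b ∈ B, there exist a nonzero real number λ and a partition of the six remaining indices into three pairs {p_1, q_1}, {p_2, q_2}, {p_3, q_3} such that (∂^b_{ij} f_8)(y) = λ·b(y_{p_1}, y_{q_1})·b(y_{p_2}, y_{q_2})·b(y_{p_3}, y_{q_3}) for all assignments y to the remaining six variables; that is, ∂^b_{ij} f_8 is a nonzero real multiple of a tensor power of b. -/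
namespace Stmt19

/-- The bit `b` as an element of `ℤ/2ℤ`. -/
def bz (b : Bool) : ZMod 2 := if b then 1 else 0

/-- The 8-ary signature `f₈`: the 0-1 indicator of the set
`T = {x ∈ (ℤ/2ℤ)⁸ : x₁+x₂+x₃+x₄ = 0, x₅+x₆+x₇+x₈ = 0, x₁+x₂+x₅+x₆ = 0,
x₁+x₃+x₅+x₇ = 0}`. -/
def f8 (x : Fin 8 → Bool) : ℝ :=
  if bz (x 0) + bz (x 1) + bz (x 2) + bz (x 3) = 0 ∧
      bz (x 4) + bz (x 5) + bz (x 6) + bz (x 7) = 0 ∧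
      bz (x 0) + bz (x 1) + bz (x 4) + bz (x 5) = 0 ∧
      bz (x 0) + bz (x 2) + bz (x 4) + bz (x 6) = 0
  then 1 else 0

/-- The Bell binary signature `=₂`, with truth table `(1,0,0,1)`. -/
def eqB (x y : Bool) : ℝ := if x = y then 1 else 0

/-- The Bell binary signature `=₂⁻`, with truth table `(1,0,0,-1)`. -/
def eqmB (x y : Bool) : ℝ := if x = y then (if x then -1 else 1) else 0

/-- The Bell binary signature `≠₂`, with truth table `(0,1,1,0)`. -/
def neqB (x y : Bool) : ℝ := if x = y then 0 else 1

/-- The Bell binary signature `≠₂⁻`, with truth table `(0,1,-1,0)`. -/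
def neqmB (x y : Bool) : ℝ := if x = y then 0 else (if x then -1 else 1)

/-- The merge `∂ᵇ_{ij} f` of `f` at the distinct indices `i, j` using the binary
signature `b`: `(∂ᵇ_{ij} f)(y) = ∑_{a,c} b a c · f(y extended by x_i = a, x_j = c)`. -/
def mergeB (f : (Fin 8 → Bool) → ℝ) (i j : Fin 8) (b : Bool → Bool → ℝ)
    (y : {k : Fin 8 // k ≠ i ∧ k ≠ j} → Bool) : ℝ :=
  ∑ a : Bool, ∑ c : Bool,
    b a c * f fun k => if h : k = i then a else if h' : k = j then c else y ⟨k, h, h'⟩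

/-- The first direction used to pair up the remaining indices. -/
def dirU (i j : Fin 8) : Fin 8 := if i ^^^ j = 1 then 2 else 1

/-- The second direction used to pair up the remaining indices. -/
def dirV (i j : Fin 8) : Fin 8 := if i ^^^ j < 4 then 4 else 2

/-- First members of the pairs: with `i` they form an affine plane. -/
def pIdx (i j : Fin 8) : Fin 3 → Fin 8 :=
  ![i ^^^ dirU i j, i ^^^ dirV i j, i ^^^ dirU i j ^^^ dirV i j]

/-- Second members of the pairs: translates of the first ones by `i xor j`. -/
def qIdx (i j : Fin 8) (t : Fin 3) : Fin 8 := pIdx i j t ^^^ (i ^^^ j)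

/-- Boolean membership test for the set `T`. -/
def memT (x : Fin 8 → Bool) : Bool :=
  !(x 0 ^^ x 1 ^^ x 2 ^^ x 3) && !(x 4 ^^ x 5 ^^ x 6 ^^ x 7) &&
  !(x 0 ^^ x 1 ^^ x 4 ^^ x 5) && !(x 0 ^^ x 2 ^^ x 4 ^^ x 6)

/-- Membership in `T` in coordinates adapted to a pair of indices. -/
def test (a c p0 p1 p2 q0 q1 q2 : Bool) : Bool :=
  !(a ^^ c ^^ p0 ^^ q0) && !(a ^^ c ^^ p1 ^^ q1) &&
  !(a ^^ c ^^ p2 ^^ q2) && !(a ^^ p0 ^^ p1 ^^ p2)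

lemma bz_sum : ∀ a b c d : Bool, bz a + bz b + bz c + bz d = 0 ↔ (!(a ^^ b ^^ c ^^ d)) = true := by
  decide

lemma f8_eq (x : Fin 8 → Bool) : f8 x = if memT x then 1 else 0 := by
  simp only [f8, bz_sum, memT, Bool.and_eq_true, and_assoc]

lemma memT_eq (i j : Fin 8) (hij : i ≠ j) (x : Fin 8 → Bool) :
    memT x = test (x i) (x j) (x (pIdx i j 0)) (x (pIdx i j 1)) (x (pIdx i j 2))
        (x (qIdx i j 0)) (x (qIdx i j 1)) (x (qIdx i j 2)) := by
  fin_cases i <;> fin_cases j <;> first | exact absurd rfl hij | skip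
  all_goals
    clear hij
    simp [memT, test, pIdx, qIdx, dirU, dirV, -Bool.not_bne]
    generalize x 0 = x0
    generalize x 1 = x1
    generalize x 2 = x2
    generalize x 3 = x3
    generalize x 4 = x4
    generalize x 5 = x5
    generalize x 6 = x6
    generalize x 7 = x7
    clear x
    revert x0 x1 x2 x3 x4 x5 x6 x7
    decide +kernel

lemma idx_ne : ∀ i j : Fin 8, i ≠ j →
    (∀ t, pIdx i j t ≠ i ∧ pIdx i j t ≠ j) ∧ (∀ t, qIdx i j t ≠ i ∧ qIdx i j t ≠ j) ∧
    (∀ s t, pIdx i j s = pIdx i j t → s = t) ∧ (∀ s t, qIdx i j s = qIdx i j t → s = t) ∧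
    (∀ s t, pIdx i j s ≠ qIdx i j t) := by
  decide +kernel

lemma bell_sum (b : Bool → Bool → ℝ)
    (hb : b = eqB ∨ b = eqmB ∨ b = neqB ∨ b = neqmB) (p0 p1 p2 q0 q1 q2 : Bool) :
    ∑ a : Bool, ∑ c : Bool, b a c * (if test a c p0 p1 p2 q0 q1 q2 then (1 : ℝ) else 0) =
      b p0 q0 * b p1 q1 * b p2 q2 := by
  rcases hb with rfl | rfl | rfl | rfl <;>
  cases p0 <;> cases p1 <;> cases p2 <;> cases q0 <;> cases q1 <;> cases q2 <;>
  simp [test, eqB, eqmB, neqB, neqmB]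

/-- `f₈` satisfies the strong Bell property: for all distinct indices `i, j` and every
Bell binary signature `b`, the merge `∂ᵇ_{ij} f₈` is a nonzero real multiple of a
tensor power of `b`, i.e. there are `λ ≠ 0` and a partition of the six remaining
indices into three pairs `{p t, q t}` with
`(∂ᵇ_{ij} f₈)(y) = λ · ∏ t, b (y (p t)) (y (q t))`. -/
theorem f8_strong_bell (i j : Fin 8) (hij : i ≠ j) (b : Bool → Bool → ℝ)
    (hb : b = eqB ∨ b = eqmB ∨ b = neqB ∨ b = neqmB) :
    ∃ lam : ℝ, lam ≠ 0 ∧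
      ∃ p q : Fin 3 → {k : Fin 8 // k ≠ i ∧ k ≠ j},
        Function.Injective p ∧ Function.Injective q ∧ (∀ s t, p s ≠ q t) ∧
        ∀ y, mergeB f8 i j b y = lam * ∏ t : Fin 3, b (y (p t)) (y (q t)) := by
  obtain ⟨hp, hq, hpi, hqi, hpq⟩ := idx_ne i j hij
  refine ⟨1, one_ne_zero, fun t => ⟨pIdx i j t, hp t⟩, fun t => ⟨qIdx i j t, hq t⟩, ?_, ?_, ?_, ?_⟩
  · intro s t h
    exact hpi s t (congrArg Subtype.val h)
  · intro s t h
    exact hqi s t (congrArg Subtype.val h)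
  · intro s t h
    exact hpq s t (congrArg Subtype.val h)
  · intro y
    rw [one_mul, Fin.prod_univ_three, ← bell_sum b hb]
    unfold mergeB
    refine Finset.sum_congr rfl fun a _ => Finset.sum_congr rfl fun c _ => ?_
    rw [f8_eq, memT_eq i j hij]
    simp only [dif_pos, dif_neg (hp _).1, dif_neg (hp _).2, dif_neg (hq _).1, dif_neg (hq _).2,
      dif_neg hij.symm]

end Stmt19
end
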